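/- arXiv:1703.04787 — 7 statements merged into one kernel-verified Lean document; each statement's English description precedes it below -/
import Mathlib

section
/- Let R be a ring, let 𝒳 be a class of right R-modules closed under isomorphisms and direct summands such that every right R-module M has a monomorphic 𝒳-envelope v_M : M → X(M), and let u : N → M be a homomorphism of right R-modules. Then the following are equivalent: (1) u is an 𝒳-strongly pure monomorphism; (2) the 𝒳-envelope v_N : N → X(N) factors through u, i.e. there exists a homomorphism g : M → X(N) with g ∘ u = v_N; (3) the composition v_M ∘ u : N → X(M) is an 𝒳-preenvelope of N. -/
/-!
Schröder-Bernstein problem for modules (Guil Asensio, Kaleboğaz, Srivastava).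
We formalize "right R-modules" as Lean `Module R` modules (the theory is side-symmetric).
A class of modules is a predicate on modules (in a fixed universe `u`).
-/

universe u

variable (R : Type u) [Ring R]

/-- The class `𝒳` of modules, as a predicate on `R`-modules. -/
abbrev ModClass := ∀ (X : Type u) [AddCommGroup X] [Module R X], Prop

/-- `X` is a direct summand of `Y`. -/
def IsDirectSummandOf (X Y : Type u) [AddCommGroup X] [Module R X]
    [AddCommGroup Y] [Module R Y] : Prop :=
  ∃ (i : X →ₗ[R] Y) (p : Y →ₗ[R] X), p ∘ₗ i = LinearMap.id

/-- `𝒳` is closed under isomorphisms. -/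
def ClosedUnderIsos (𝒳 : ModClass R) : Prop :=
  ∀ (X Y : Type u) [AddCommGroup X] [Module R X] [AddCommGroup Y] [Module R Y],
    Nonempty (X ≃ₗ[R] Y) → 𝒳 X → 𝒳 Y

/-- `𝒳` is closed under direct summands. -/
def ClosedUnderSummands (𝒳 : ModClass R) : Prop :=
  ∀ (X Y : Type u) [AddCommGroup X] [Module R X] [AddCommGroup Y] [Module R Y],
    IsDirectSummandOf R X Y → 𝒳 Y → 𝒳 X

/-- `u : M → X` is an `𝒳`-preenvelope of `M`: `X ∈ 𝒳` and every homomorphism from `M`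
to a member of `𝒳` factors through `u`. -/
def IsPreenvelope (𝒳 : ModClass R) {M X : Type u} [AddCommGroup M] [Module R M]
    [AddCommGroup X] [Module R X] (u : M →ₗ[R] X) : Prop :=
  𝒳 X ∧ ∀ (X' : Type u) [AddCommGroup X'] [Module R X'], 𝒳 X' →
    ∀ g : M →ₗ[R] X', ∃ h : X →ₗ[R] X', h ∘ₗ u = g

/-- `u : M → X` is an `𝒳`-envelope: a preenvelope such that any endomorphism `h` of `X`
with `h ∘ u = u` is an automorphism. -/
def IsEnvelope (𝒳 : ModClass R) {M X : Type u} [AddCommGroup M] [Module R M]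
    [AddCommGroup X] [Module R X] (u : M →ₗ[R] X) : Prop :=
  IsPreenvelope R 𝒳 u ∧ ∀ h : X →ₗ[R] X, h ∘ₗ u = u → Function.Bijective h

/-- Every `R`-module has a monomorphic `𝒳`-envelope. -/
def HasMonoEnvelopes (𝒳 : ModClass R) : Prop :=
  ∀ (M : Type u) [AddCommGroup M] [Module R M],
    ∃ (X : Type u) (_ : AddCommGroup X) (_ : Module R X) (u : M →ₗ[R] X),
      Function.Injective u ∧ IsEnvelope R 𝒳 u

/-- `u : N → M` is an `𝒳`-strongly pure monomorphism: every homomorphism `f : N → X`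
with `X ∈ 𝒳` extends to `g : M → X` with `g ∘ u = f`. -/
def IsStronglyPureMono (𝒳 : ModClass R) {N M : Type u} [AddCommGroup N] [Module R N]
    [AddCommGroup M] [Module R M] (u : N →ₗ[R] M) : Prop :=
  ∀ (X : Type u) [AddCommGroup X] [Module R X], 𝒳 X →
    ∀ f : N →ₗ[R] X, ∃ g : M →ₗ[R] X, g ∘ₗ u = f

section

variable {R} {𝒳 : ModClass R} {N M X : Type u} [AddCommGroup N] [Module R N]
  [AddCommGroup M] [Module R M] [AddCommGroup X] [Module R X] {u : N →ₗ[R] M} {v : M →ₗ[R] X}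

theorem isPreenvelope_iff_mem_and_isStronglyPureMono :
    IsPreenvelope R 𝒳 u ↔ 𝒳 M ∧ IsStronglyPureMono R 𝒳 u :=
  Iff.rfl

theorem IsStronglyPureMono.comp (hv : IsStronglyPureMono R 𝒳 v)
    (hu : IsStronglyPureMono R 𝒳 u) : IsStronglyPureMono R 𝒳 (v ∘ₗ u) := by
  intro Y _ _ hY f
  obtain ⟨g, rfl⟩ := hu Y hY f
  obtain ⟨h, rfl⟩ := hv Y hY g
  exact ⟨h, rfl⟩

theorem IsStronglyPureMono.of_comp (h : IsStronglyPureMono R 𝒳 (v ∘ₗ u)) :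
    IsStronglyPureMono R 𝒳 u := by
  intro Y _ _ hY f
  obtain ⟨g, rfl⟩ := h Y hY f
  exact ⟨g ∘ₗ v, rfl⟩

theorem IsPreenvelope.isStronglyPureMono_iff_exists_comp_eq {w : N →ₗ[R] X}
    (hw : IsPreenvelope R 𝒳 w) :
    IsStronglyPureMono R 𝒳 u ↔ ∃ g : M →ₗ[R] X, g ∘ₗ u = w := by
  obtain ⟨hX, hw_pure⟩ := isPreenvelope_iff_mem_and_isStronglyPureMono.mp hw
  refine ⟨fun hu ↦ hu X hX w, ?_⟩
  rintro ⟨g, rfl⟩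
  exact hw_pure.of_comp

theorem IsPreenvelope.isStronglyPureMono_iff_isPreenvelope_comp (hv : IsPreenvelope R 𝒳 v) :
    IsStronglyPureMono R 𝒳 u ↔ IsPreenvelope R 𝒳 (v ∘ₗ u) := by
  obtain ⟨hX, hv_pure⟩ := isPreenvelope_iff_mem_and_isStronglyPureMono.mp hv
  rw [isPreenvelope_iff_mem_and_isStronglyPureMono]
  exact ⟨fun hu ↦ ⟨hX, hv_pure.comp hu⟩, fun h ↦ h.2.of_comp⟩

theorem stmt0_general {XN XM : Type u} [AddCommGroup XN] [Module R XN]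
    [AddCommGroup XM] [Module R XM] {vN : N →ₗ[R] XN} (hvN : IsPreenvelope R 𝒳 vN)
    {vM : M →ₗ[R] XM} (hvM : IsPreenvelope R 𝒳 vM) (u : N →ₗ[R] M) :
    List.TFAE [IsStronglyPureMono R 𝒳 u,
      ∃ g : M →ₗ[R] XN, g ∘ₗ u = vN,
      IsPreenvelope R 𝒳 (vM ∘ₗ u)] := by
  tfae_have 1 ↔ 2 := hvN.isStronglyPureMono_iff_exists_comp_eq
  tfae_have 1 ↔ 3 := hvM.isStronglyPureMono_iff_isPreenvelope_comp
  tfae_finish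

end

/-- **Lemma 2.1.** For a homomorphism `u : N → M`, the following are equivalent:
(1) `u` is an `𝒳`-strongly pure monomorphism;
(2) the `𝒳`-envelope `v_N : N → X(N)` factors through `u`;
(3) `v_M ∘ u : N → X(M)` is an `𝒳`-preenvelope. -/
theorem stmt0 (𝒳 : ModClass R) (hiso : ClosedUnderIsos R 𝒳)
    (hsum : ClosedUnderSummands R 𝒳) (henv : HasMonoEnvelopes R 𝒳)
    {N M XN XM : Type u} [AddCommGroup N] [Module R N] [AddCommGroup M] [Module R M]
    [AddCommGroup XN] [Module R XN] [AddCommGroup XM] [Module R XM]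
    (vN : N →ₗ[R] XN) (hvN : Function.Injective vN ∧ IsEnvelope R 𝒳 vN)
    (vM : M →ₗ[R] XM) (hvM : Function.Injective vM ∧ IsEnvelope R 𝒳 vM)
    (u : N →ₗ[R] M) :
    List.TFAE [IsStronglyPureMono R 𝒳 u,
      ∃ g : M →ₗ[R] XN, g ∘ₗ u = vN,
      IsPreenvelope R 𝒳 (vM ∘ₗ u)] :=
  stmt0_general hvN.2.1 hvM.2.1 u
end

section
/- Let R be a ring and let 𝒳 be a class of right R-modules closed under isomorphisms and direct summands such that every right R-module has a monomorphic 𝒳-envelope. Let X ∈ 𝒳 be an 𝒳-strongly purely closed module and let Y ∈ 𝒳 be an 𝒳-strongly pure submodule of X. If there exists an 𝒳-strongly pure monomorphism u : X → Y, then X ≅ Y. -/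
/-!
Schröder-Bernstein problem for modules (Guil Asensio, Kaleboğaz, Srivastava).
We formalize "right R-modules" as Lean `Module R` modules (the theory is side-symmetric).
A class of modules is a predicate on modules (in a fixed universe `u`).
-/

universe u

variable (R : Type u) [Ring R]

/-- `A ∈ add[M]`: `A` is a direct summand of a finite direct sum of copies of `M`. -/
def InAdd (M : Type u) [AddCommGroup M] [Module R M]
    (A : Type u) [AddCommGroup A] [Module R A] : Prop :=
  ∃ n : ℕ, IsDirectSummandOf R A (Fin n → M)

/-- `M` is `𝒳`-strongly purely closed: any direct limit of splitting monomorphisms among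
objects of `add[M]` is an `𝒳`-strongly pure monomorphism. -/
def IsStronglyPurelyClosed (𝒳 : ModClass R) (M : Type u) [AddCommGroup M] [Module R M] :
    Prop :=
  ∀ (ι : Type u) [Preorder ι] [IsDirected ι (· ≤ ·)] [Nonempty ι] [DecidableEq ι]
    (A B : ι → Type u) [∀ i, AddCommGroup (A i)] [∀ i, Module R (A i)]
    [∀ i, AddCommGroup (B i)] [∀ i, Module R (B i)]
    (fA : ∀ i j, i ≤ j → A i →ₗ[R] A j) (fB : ∀ i j, i ≤ j → B i →ₗ[R] B j)
    [DirectedSystem A fun i j h => fA i j h] [DirectedSystem B fun i j h => fB i j h],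
    (∀ i, InAdd R M (A i)) → (∀ i, InAdd R M (B i)) →
    ∀ (g : ∀ i, A i →ₗ[R] B i) (hg : ∀ i j h, g j ∘ₗ fA i j h = fB i j h ∘ₗ g i),
      (∀ i, ∃ p : B i →ₗ[R] A i, p ∘ₗ g i = LinearMap.id) →
      IsStronglyPureMono R 𝒳 (Module.DirectLimit.map g hg)

/-!
Write `X ≃ H × Y`. Since `X` embeds in `Y` as a summand, so does `H × Y`, and iterating this
embedding yields a map `φ : H^(ℕ) → Y` together with projections `Y → H` recovering each coordinate.
Thus `φ` splits on every finite subsum, and strong pure closedness makes it `𝒳`-strongly pure.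
The `𝒳`-envelope `E` of `H^(ℕ)` is therefore a summand of `Y`, say `Y ≃ K × E`. Now
`H × H^(ℕ) ≃ H^(ℕ)` and uniqueness of envelopes give `H × E ≃ E`, hence
`X ≃ H × K × E ≃ K × E ≃ Y`.
-/

/-- `M` admits an `𝒳`-envelope, which unlike in `HasMonoEnvelopes` need not be injective. -/
def HasEnvelope (𝒳 : ModClass R) (M : Type u) [AddCommGroup M] [Module R M] : Prop :=
  ∃ (E : Type u) (_ : AddCommGroup E) (_ : Module R E) (e : M →ₗ[R] E), IsEnvelope R 𝒳 e

section

variable {R} {𝒳 : ModClass R}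
variable {A B E F H M N X Y : Type u}
variable [AddCommGroup A] [AddCommGroup B] [AddCommGroup E] [AddCommGroup F] [AddCommGroup H]
  [AddCommGroup M] [AddCommGroup N] [AddCommGroup X] [AddCommGroup Y]
variable [Module R A] [Module R B] [Module R E] [Module R F] [Module R H]
  [Module R M] [Module R N] [Module R X] [Module R Y]

theorem HasMonoEnvelopes.hasEnvelope (h : HasMonoEnvelopes R 𝒳) (M : Type u) [AddCommGroup M]
    [Module R M] : HasEnvelope R 𝒳 M := by
  obtain ⟨E, _, _, e, -, he⟩ := h M
  exact ⟨E, _, _, e, he⟩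

namespace IsDirectSummandOf

theorem of_linearEquiv (e : A ≃ₗ[R] B) : IsDirectSummandOf R A B :=
  ⟨e, e.symm, e.symm_comp⟩

theorem trans (hAB : IsDirectSummandOf R A B) (hBM : IsDirectSummandOf R B M) :
    IsDirectSummandOf R A M := by
  obtain ⟨i, p, hpi⟩ := hAB
  obtain ⟨j, q, hqj⟩ := hBM
  refine ⟨j ∘ₗ i, p ∘ₗ q, ?_⟩
  rw [LinearMap.comp_assoc, ← LinearMap.comp_assoc i j q, hqj, LinearMap.id_comp, hpi]

theorem fst : IsDirectSummandOf R A (A × B) :=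
  ⟨LinearMap.inl R A B, LinearMap.fst R A B, LinearMap.fst_comp_inl R A B⟩

theorem prod_left (h : IsDirectSummandOf R A B) : IsDirectSummandOf R (M × A) (M × B) := by
  obtain ⟨i, p, hpi⟩ := h
  refine ⟨LinearMap.id.prodMap i, LinearMap.id.prodMap p, ?_⟩
  rw [LinearMap.prodMap_comp, hpi, LinearMap.id_comp, LinearMap.prodMap_id]

theorem pi (ι : Type) (h : IsDirectSummandOf R A B) :
    IsDirectSummandOf R (ι → A) (ι → B) := by
  obtain ⟨i, p, hpi⟩ := h
  refine ⟨i.compLeft ι, p.compLeft ι, LinearMap.ext fun x => funext fun k => ?_⟩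
  exact LinearMap.congr_fun hpi (x k)

theorem exists_prod_linearEquiv (h : IsDirectSummandOf R A B) :
    ∃ K : Submodule R B, Nonempty (B ≃ₗ[R] (K × A)) := by
  obtain ⟨i, p, hpi⟩ := h
  let splitting := (LinearMap.exact_subtype_ker_map p).splitSurjectiveEquiv
    (LinearMap.ker p).injective_subtype
  exact ⟨LinearMap.ker p, ⟨(splitting ⟨i, hpi⟩).1⟩⟩

theorem inAdd (h : IsDirectSummandOf R A M) : InAdd R M A :=
  ⟨1, h.trans (of_linearEquiv (LinearEquiv.funUnique (Fin 1) R M).symm)⟩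

theorem exists_comp_eq_lapply (h : IsDirectSummandOf R (H × Y) Y) :
    ∃ (φ : (ℕ →₀ H) →ₗ[R] Y) (c : ℕ → Y →ₗ[R] H), ∀ k, c k ∘ₗ φ = Finsupp.lapply k := by
  obtain ⟨i, p, hpi⟩ := h
  have hp (z : H × Y) : p (i z) = z := LinearMap.congr_fun hpi z
  let a : H →ₗ[R] Y := i ∘ₗ LinearMap.inl R H Y
  let b : Module.End R Y := i ∘ₗ LinearMap.inr R H Y
  let c : Y →ₗ[R] H := LinearMap.fst R H Y ∘ₗ p
  let d : Module.End R Y := LinearMap.snd R H Y ∘ₗ p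
  have hca (x : H) : c (a x) = x := by simp [c, a, hp]
  have hcb (y : Y) : c (b y) = 0 := by simp [c, b, hp]
  have hda (x : H) : d (a x) = 0 := by simp [d, a, hp]
  have hdb (y : Y) : d (b y) = y := by simp [d, b, hp]
  have orthogonality (k n : ℕ) (x : H) :
      c ((d ^ k) ((b ^ n) (a x))) = Finsupp.single n x k := by
    induction k generalizing n with
    | zero => cases n <;> simp [pow_succ', hca, hcb]
    | succ k ih =>
      cases n with
      | zero => simp [pow_succ, hda]
      | succ n => simp [pow_succ d, pow_succ' b, hdb, ih, Finsupp.single_apply]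
  refine ⟨Finsupp.lsum ℕ fun n => (b ^ n) ∘ₗ a, fun k => c ∘ₗ (d ^ k), fun k => ?_⟩
  refine Finsupp.lhom_ext fun n x => ?_
  simpa using orthogonality k n x

end IsDirectSummandOf

theorem IsStronglyPureMono.isDirectSummandOf {v : N →ₗ[R] M} (hv : IsStronglyPureMono R 𝒳 v)
    (hN : 𝒳 N) : IsDirectSummandOf R N M := by
  obtain ⟨p, hp⟩ := hv N hN LinearMap.id
  exact ⟨v, p, hp⟩

theorem InAdd.trans_isDirectSummandOf (hA : InAdd R M A) (hM : IsDirectSummandOf R M N) :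
    InAdd R N A := by
  obtain ⟨n, hA⟩ := hA
  exact ⟨n, hA.trans (hM.pi (Fin n))⟩

theorem directLimit_of_eq_of_forall_eq_id {ι : Type u} [Preorder ι] [IsDirectedOrder ι]
    [DecidableEq ι] {f : ∀ i j : ι, i ≤ j → X →ₗ[R] X} (hf : ∀ i j h, f i j h = LinearMap.id)
    (i j : ι) :
    Module.DirectLimit.of R ι (fun _ => X) f i = Module.DirectLimit.of R ι (fun _ => X) f j := by
  obtain ⟨k, hik, hjk⟩ := exists_ge_ge i j
  have of_eq_of (l : ι) (hlk : l ≤ k) :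
      Module.DirectLimit.of R ι (fun _ => X) f k = Module.DirectLimit.of R ι (fun _ => X) f l := by
    ext x
    have hx := Module.DirectLimit.of_f (G := fun _ => X) (f := f) (hij := hlk) (x := x)
    rwa [hf, LinearMap.id_apply] at hx
  rw [← of_eq_of i hik, of_eq_of j hjk]

namespace IsStronglyPurelyClosed

theorem of_isDirectSummandOf (hX : IsStronglyPurelyClosed R 𝒳 X)
    (hYX : IsDirectSummandOf R Y X) : IsStronglyPurelyClosed R 𝒳 Y :=
  fun ι _ _ _ _ A B _ _ _ _ fA fB _ _ hA hB =>
    hX ι A B fA fB (fun i => (hA i).trans_isDirectSummandOf hYX)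
      (fun i => (hB i).trans_isDirectSummandOf hYX)

theorem isStronglyPureMono_of_directedOn (hX : IsStronglyPurelyClosed R 𝒳 X) (φ : M →ₗ[R] X)
    {S : Set (Submodule R M)} (hne : S.Nonempty) (hdir : DirectedOn (· ≤ ·) S)
    (hsup : sSup S = ⊤)
    (hsplit : ∀ N ∈ S, ∃ p : X →ₗ[R] N, p ∘ₗ φ ∘ₗ N.subtype = LinearMap.id) :
    IsStronglyPureMono R 𝒳 φ := by
  classical
  intro Z _ _ hZ f
  have : Nonempty S := hne.to_subtype
  have : IsDirectedOrder S := ⟨hdir.directed_val⟩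
  let fA (N N' : S) (h : N ≤ N') : N.1 →ₗ[R] N'.1 := Submodule.inclusion h
  let fB (N N' : S) (_ : N ≤ N') : X →ₗ[R] X := LinearMap.id
  have : DirectedSystem (fun N : S => N.1) (fA · · ·) := ⟨fun _ _ => rfl, fun _ _ _ _ _ _ => rfl⟩
  have : DirectedSystem (fun _ : S => X) (fB · · ·) := ⟨fun _ _ => rfl, fun _ _ _ _ _ _ => rfl⟩
  let ofA := Module.DirectLimit.of R S (fun N => N.1) fA
  let ofB := Module.DirectLimit.of R S (fun _ => X) fB
  let φlim : Module.DirectLimit (fun N : S => N.1) fA →ₗ[R]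
      Module.DirectLimit (fun _ : S => X) fB :=
    Module.DirectLimit.map (fun N => φ ∘ₗ N.1.subtype) fun _ _ _ => rfl
  let flim : Module.DirectLimit (fun N : S => N.1) fA →ₗ[R] Z :=
    Module.DirectLimit.lift R S _ fA (fun N => f ∘ₗ N.1.subtype) fun _ _ _ _ => rfl
  have hpure : IsStronglyPureMono R 𝒳 φlim :=
    hX S (fun N => N.1) (fun _ => X) fA fB
      (fun N => IsDirectSummandOf.inAdd ⟨_, hsplit N.1 N.2⟩)
      (fun _ => (IsDirectSummandOf.of_linearEquiv (LinearEquiv.refl R X)).inAdd)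
      (fun N => φ ∘ₗ N.1.subtype) (fun _ _ _ => rfl) (fun N => hsplit N.1 N.2)
  have φlim_ofA (N : S) (x : N.1) : φlim (ofA N x) = ofB N (φ x) :=
    Module.DirectLimit.map_apply_of (f := fA) (f' := fB) (fun N => φ ∘ₗ N.1.subtype) _ x
  obtain ⟨g, hg⟩ := hpure Z hZ flim
  obtain ⟨N₀⟩ := ‹Nonempty S›
  refine ⟨g ∘ₗ ofB N₀, LinearMap.ext fun x => ?_⟩
  obtain ⟨N, hN, hx⟩ : ∃ N ∈ S, x ∈ N :=
    (Submodule.mem_sSup_of_directed hne hdir).1 (hsup ▸ Submodule.mem_top)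
  have ofB_eq : ofB N₀ = ofB ⟨N, hN⟩ := directLimit_of_eq_of_forall_eq_id (fun _ _ _ => rfl) _ _
  calc g (ofB N₀ (φ x)) = g (ofB ⟨N, hN⟩ (φ x)) := by rw [ofB_eq]
    _ = g (φlim (ofA ⟨N, hN⟩ ⟨x, hx⟩)) := by rw [φlim_ofA]
    _ = flim (ofA ⟨N, hN⟩ ⟨x, hx⟩) := LinearMap.congr_fun hg _
    _ = f x := Module.DirectLimit.lift_of _ _ _

theorem isStronglyPureMono_of_comp_eq_lapply {ι : Type} (hX : IsStronglyPurelyClosed R 𝒳 X)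
    (φ : (ι →₀ H) →ₗ[R] X) (c : ι → X →ₗ[R] H) (hc : ∀ k, c k ∘ₗ φ = Finsupp.lapply k) :
    IsStronglyPureMono R 𝒳 φ := by
  classical
  have hmono : Monotone fun s : Finset ι => Finsupp.supported H R (s : Set ι) :=
    fun _ _ hst => Finsupp.supported_mono (Finset.coe_subset.2 hst)
  refine hX.isStronglyPureMono_of_directedOn φ (Set.range_nonempty _)
    hmono.directed_le.directedOn_range ?_ ?_
  · refine eq_top_iff.2 fun x _ => ?_
    exact Submodule.mem_sSup_of_mem (Set.mem_range_self x.support)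
      (Finsupp.mem_supported_support R x)
  · rintro _ ⟨s, rfl⟩
    let C : X →ₗ[R] (ι →₀ H) := ∑ k ∈ s, Finsupp.lsingle k ∘ₗ c k
    have hC : C ∘ₗ φ ∘ₗ (Finsupp.supported H R (s : Set ι)).subtype =
        (Finsupp.supported H R (s : Set ι)).subtype := by
      refine LinearMap.ext fun x => ?_
      have hcx (k : ι) : c k (φ x) = x.1 k := LinearMap.congr_fun (hc k) x
      have hsupp : x.1.support ⊆ s := Finset.coe_subset.1 ((Finsupp.mem_supported R _).1 x.2)
      simp only [C, LinearMap.comp_apply, LinearMap.sum_apply, Submodule.subtype_apply, hcx]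
      exact (Finsupp.sum_of_support_subset _ hsupp _ (by simp)).symm.trans (Finsupp.sum_single _)
    refine ⟨Finsupp.restrictDom H R (s : Set ι) ∘ₗ C, ?_⟩
    rw [LinearMap.comp_assoc, hC, Finsupp.restrictDom_comp_subtype]

end IsStronglyPurelyClosed

/-- Block elimination: if the corner `h₁₁` is invertible, then `s` is `-h₁₁⁻¹ h₁₂`. -/
theorem bijective_of_bijective_schurComplement {h : E × F →ₗ[R] A × B} (s : F →ₗ[R] E)
    (hs : ∀ y, (h (s y, y)).1 = 0) (hfst : Function.Bijective fun x => (h (x, 0)).1)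
    (hschur : Function.Bijective fun y => (h (s y, y)).2) : Function.Bijective h := by
  have hsplit (x : E) (y : F) :
      h (x + s y, y) = ((h (x, 0)).1, (h (x, 0)).2 + (h (s y, y)).2) := by
    have : ((x + s y, y) : E × F) = (x, 0) + (s y, y) := by simp
    rw [this, map_add]
    ext <;> simp [hs]
  constructor
  · rw [injective_iff_map_eq_zero]
    rintro ⟨x, y⟩ hxy
    have h0 : h (0, 0) = 0 := map_zero h
    rw [← sub_add_cancel x (s y), hsplit, Prod.mk_eq_zero] at hxy
    have hx : x - s y = 0 := hfst.1 (by simpa [h0] using hxy.1)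
    have hy : y = 0 := hschur.1 (by simpa [hx, h0] using hxy.2)
    simpa [hy] using hx
  · rintro ⟨p, q⟩
    obtain ⟨x, hx : (h (x, 0)).1 = p⟩ := hfst.2 p
    obtain ⟨y, hy : (h (s y, y)).2 = q - (h (x, 0)).2⟩ := hschur.2 (q - (h (x, 0)).2)
    exact ⟨(x + s y, y), by rw [hsplit, hx, hy, add_sub_cancel]⟩

theorem isEnvelope_id (hM : 𝒳 M) : IsEnvelope R 𝒳 (LinearMap.id : M →ₗ[R] M) :=
  ⟨⟨hM, fun _ _ _ _ g => ⟨g, rfl⟩⟩, fun h hh => by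
    rw [LinearMap.comp_id] at hh
    exact hh ▸ Function.bijective_id⟩

namespace IsEnvelope

theorem nonempty_linearEquiv {e : M →ₗ[R] E} {f : M →ₗ[R] F} (he : IsEnvelope R 𝒳 e)
    (hf : IsEnvelope R 𝒳 f) : Nonempty (E ≃ₗ[R] F) := by
  obtain ⟨a, ha⟩ := he.1.2 F hf.1.1 f
  obtain ⟨b, hb⟩ := hf.1.2 E he.1.1 e
  have hba : Function.Bijective (b ∘ₗ a) := he.2 _ (by rw [LinearMap.comp_assoc, ha, hb])
  have hab : Function.Bijective (a ∘ₗ b) := hf.2 _ (by rw [LinearMap.comp_assoc, hb, ha])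
  exact ⟨LinearEquiv.ofBijective a
    ⟨Function.Injective.of_comp (f := b) hba.1, Function.Surjective.of_comp (g := b) hab.2⟩⟩

theorem comp_linearEquiv {e : M →ₗ[R] E} (he : IsEnvelope R 𝒳 e) (σ : N ≃ₗ[R] M) :
    IsEnvelope R 𝒳 (e ∘ₗ σ.toLinearMap) := by
  refine ⟨⟨he.1.1, fun Z _ _ hZ g => ?_⟩, fun h hh => he.2 h ?_⟩
  · obtain ⟨k, hk⟩ := he.1.2 Z hZ (g ∘ₗ σ.symm.toLinearMap)
    exact ⟨k, by rw [← LinearMap.comp_assoc, hk, LinearMap.comp_assoc, σ.symm_comp,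
      LinearMap.comp_id]⟩
  · rw [← LinearMap.comp_assoc] at hh
    exact (LinearMap.cancel_right σ.surjective).1 hh

theorem prodMap {e : M →ₗ[R] E} {f : N →ₗ[R] F} (he : IsEnvelope R 𝒳 e)
    (hf : IsEnvelope R 𝒳 f) (hEF : 𝒳 (E × F)) : IsEnvelope R 𝒳 (e.prodMap f) := by
  refine ⟨⟨hEF, fun Z _ _ hZ g => ?_⟩, fun h hh => ?_⟩
  · obtain ⟨k, hk⟩ := he.1.2 Z hZ (g ∘ₗ LinearMap.inl R M N)
    obtain ⟨l, hl⟩ := hf.1.2 Z hZ (g ∘ₗ LinearMap.inr R M N)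
    refine ⟨k.coprod l, ?_⟩
    have hkm (m : M) : k (e m) = g (m, 0) := LinearMap.congr_fun hk m
    have hln (n : N) : l (f n) = g (0, n) := LinearMap.congr_fun hl n
    ext <;> simp [hkm, hln]
  · have hhe (m : M) : h (e m, 0) = (e m, 0) := by simpa using LinearMap.congr_fun hh (m, 0)
    have hhf (n : N) : h (0, f n) = (0, f n) := by simpa using LinearMap.congr_fun hh (0, n)
    let a : E ≃ₗ[R] E := LinearEquiv.ofBijective
      (LinearMap.fst R E F ∘ₗ h ∘ₗ LinearMap.inl R E F)
      (he.2 _ (LinearMap.ext fun m => by simp [hhe]))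
    let b : F →ₗ[R] E := LinearMap.fst R E F ∘ₗ h ∘ₗ LinearMap.inr R E F
    let s : F →ₗ[R] E := -(a.symm.toLinearMap ∘ₗ b)
    have hfst (x : E) (y : F) : (h (x, y)).1 = a x + b y := by
      simp [a, b, ← Prod.fst_add, ← map_add]
    have hsf (n : N) : s (f n) = 0 := by simp [s, b, hhf]
    refine bijective_of_bijective_schurComplement s (fun y => by simp [hfst, s]) a.bijective ?_
    exact hf.2 (LinearMap.snd R E F ∘ₗ h ∘ₗ s.prod LinearMap.id)
      (LinearMap.ext fun n => by simp [hsf, hhf])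

theorem isDirectSummandOf {e : M →ₗ[R] E} (he : IsEnvelope R 𝒳 e) {φ : M →ₗ[R] X}
    (hφ : IsStronglyPureMono R 𝒳 φ) (hX : 𝒳 X) : IsDirectSummandOf R E X := by
  obtain ⟨p, hp⟩ := hφ E he.1.1 e
  obtain ⟨q, hq⟩ := he.1.2 X hX φ
  have hpq : Function.Bijective (p ∘ₗ q) := he.2 _ (by rw [LinearMap.comp_assoc, hq, hp])
  let α := LinearEquiv.ofBijective (p ∘ₗ q) hpq
  exact ⟨q, α.symm.toLinearMap ∘ₗ p, α.symm_comp⟩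

end IsEnvelope

theorem nonempty_prod_finsupp_nat_linearEquiv :
    Nonempty ((H × (ℕ →₀ H)) ≃ₗ[R] (ℕ →₀ H)) :=
  ⟨(LinearEquiv.prodComm R H (ℕ →₀ H)).trans <|
    ((LinearEquiv.refl R (ℕ →₀ H)).prodCongr
      (Finsupp.uniqueLinearEquiv R H PUnit.unit).symm).trans <|
    (Finsupp.sumFinsuppLEquivProdFinsupp R).symm.trans <|
    Finsupp.domLCongr Equiv.natSumPUnitEquivNat.{0}⟩

theorem IsEnvelope.nonempty_prod_linearEquiv {e : (ℕ →₀ H) →ₗ[R] E} (he : IsEnvelope R 𝒳 e)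
    (hH : 𝒳 H) (hHE : 𝒳 (H × E)) : Nonempty ((H × E) ≃ₗ[R] E) := by
  obtain ⟨σ⟩ := nonempty_prod_finsupp_nat_linearEquiv (R := R) (H := H)
  exact ((isEnvelope_id hH).prodMap he hHE).nonempty_linearEquiv (he.comp_linearEquiv σ)

theorem IsStronglyPurelyClosed.nonempty_prod_linearEquiv (hY : IsStronglyPurelyClosed R 𝒳 Y)
    (hsum : ClosedUnderSummands R 𝒳) (henv : HasEnvelope R 𝒳 (ℕ →₀ H)) (hY𝒳 : 𝒳 Y)
    (hHY : IsDirectSummandOf R (H × Y) Y) : Nonempty ((H × Y) ≃ₗ[R] Y) := by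
  obtain ⟨φ, c, hc⟩ := hHY.exists_comp_eq_lapply
  have hφ : IsStronglyPureMono R 𝒳 φ := hY.isStronglyPureMono_of_comp_eq_lapply φ c hc
  obtain ⟨E, _, _, e, he⟩ := henv
  have hEY : IsDirectSummandOf R E Y := he.isDirectSummandOf hφ hY𝒳
  have hHE : 𝒳 (H × E) := hsum _ _ (hEY.prod_left.trans hHY) hY𝒳
  obtain ⟨absorb⟩ := he.nonempty_prod_linearEquiv (hsum _ _ .fst hHE) hHE
  obtain ⟨K, ⟨θ⟩⟩ := hEY.exists_prod_linearEquiv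
  exact ⟨((LinearEquiv.refl R H).prodCongr (θ.trans (LinearEquiv.prodComm R K E))).trans <|
    (LinearEquiv.prodAssoc R H E K).symm.trans <|
    (absorb.prodCongr (LinearEquiv.refl R K)).trans <|
    (LinearEquiv.prodComm R E K).trans θ.symm⟩

theorem stmt4_general (hsum : ClosedUnderSummands R 𝒳)
    (henv : ∀ (M : Type u) [AddCommGroup M] [Module R M], 𝒳 M → HasEnvelope R 𝒳 (ℕ →₀ M))
    (hX𝒳 : 𝒳 X) (hXclosed : IsStronglyPurelyClosed R 𝒳 X) (hY𝒳 : 𝒳 Y)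
    {v : Y →ₗ[R] X} (hv : IsStronglyPureMono R 𝒳 v)
    {u : X →ₗ[R] Y} (hu : IsStronglyPureMono R 𝒳 u) : Nonempty (X ≃ₗ[R] Y) := by
  have hYX : IsDirectSummandOf R Y X := hv.isDirectSummandOf hY𝒳
  have hXY : IsDirectSummandOf R X Y := hu.isDirectSummandOf hX𝒳
  obtain ⟨H, ⟨θ⟩⟩ := hYX.exists_prod_linearEquiv
  have hHX : IsDirectSummandOf R (H × Y) X := .of_linearEquiv θ.symm
  have hH𝒳 : 𝒳 H := hsum _ _ (IsDirectSummandOf.fst.trans hHX) hX𝒳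
  obtain ⟨absorb⟩ := (hXclosed.of_isDirectSummandOf hYX).nonempty_prod_linearEquiv hsum
    (henv H hH𝒳) hY𝒳 (hHX.trans hXY)
  exact ⟨θ.trans absorb⟩

end

/-- **Theorem 2.4.** Let `X ∈ 𝒳` be `𝒳`-strongly purely closed and let `Y ∈ 𝒳` be an
`𝒳`-strongly pure submodule of `X`. If there is an `𝒳`-strongly pure monomorphism
`u : X → Y`, then `X ≅ Y`. -/
theorem stmt4 (𝒳 : ModClass R) (hiso : ClosedUnderIsos R 𝒳)
    (hsum : ClosedUnderSummands R 𝒳) (henv : HasMonoEnvelopes R 𝒳)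
    (X : Type u) [AddCommGroup X] [Module R X] (hX𝒳 : 𝒳 X)
    (hXclosed : IsStronglyPurelyClosed R 𝒳 X)
    (Y : Submodule R X) (hY𝒳 : 𝒳 Y)
    (hYpure : IsStronglyPureMono R 𝒳 Y.subtype)
    (u : X →ₗ[R] Y) (hu : IsStronglyPureMono R 𝒳 u) :
    Nonempty (X ≃ₗ[R] Y) :=
  stmt4_general hsum (fun M _ _ _ => henv.hasEnvelope (ℕ →₀ M)) hX𝒳 hXclosed hY𝒳 hYpure hu
end

section
/- Let R be a ring, let E be an injective right R-module and let E′ be an injective submodule of E. If there exists an injective R-linear map u : E → E′, then E ≅ E′. -/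
/-!
Bumby's theorem (Corollary 2.5(1)): "right R-modules" are formalized as Lean `Module R`
modules (the theory is side-symmetric).
-/

universe u

variable (R : Type u) [Ring R]

/-- `E` is an injective `R`-module: for every injective `R`-linear map `i : A → B`, every
`R`-linear map `A → E` extends to an `R`-linear map `B → E`. -/
def IsInjectiveModule (E : Type u) [AddCommGroup E] [Module R E] : Prop :=
  ∀ (A B : Type u) [AddCommGroup A] [Module R A] [AddCommGroup B] [Module R B]
    (i : A →ₗ[R] B), Function.Injective i →
    ∀ f : A →ₗ[R] E, ∃ g : B →ₗ[R] E, g ∘ₗ i = f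

/-!
This is Bumby's Cantor–Bernstein argument. Let `i : E' → E` and `u : E → E'` be injective, and let
`q` be a retraction of `i`. The monotone map `X ↦ q⁻¹(u(X))` on submodules of `E` has a fixed point
`S`. Choose a decomposition `E' = H ⊕ K` in which `u(S)` is essential in `H`. Then `S = q⁻¹(u(S))`
is essential in `q⁻¹(H)`, and `E = q⁻¹(H) ⊕ i(K)`. Thus `q⁻¹(H)` and `H` are injective hulls of the
isomorphic modules `S` and `u(S)`, hence isomorphic, and `i(K) ≅ K`.
-/

universe v

section Lattice

variable {α : Type*}

/-- The lattice form of the notion of an essential (or large) submodule: `a` is essential in `b` if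
`a ≤ b` and every nonzero element below `b` meets `a`. Essentiality is taken relative to `b`, so
that for submodules both `a` and `b` live in the same ambient module. -/
structure IsEssentialIn [PartialOrder α] [OrderBot α] (a b : α) : Prop where
  le : a ≤ b
  eq_bot_of_disjoint : ∀ x ≤ b, Disjoint x a → x = ⊥

theorem exists_le_maximal_disjoint [CompleteLattice α] [IsCompactlyGenerated α] {a b : α}
    (hab : Disjoint a b) : ∃ c, a ≤ c ∧ Maximal (Disjoint · b) c :=
  zorn_le_nonempty₀ {x | Disjoint x b}
    (fun s hs hchain _ _ ↦ ⟨sSup s, hchain.directedOn.disjoint_sSup_left.2 hs, fun _ ↦ le_sSup⟩)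
    a hab

theorem isEssentialIn_of_maximal_disjoint [Lattice α] [OrderBot α] [IsModularLattice α]
    {a b c : α} (hc : Maximal (Disjoint · a) c) (hab : a ≤ b) (hbc : Disjoint b c) :
    IsEssentialIn a b where
  le := hab
  eq_bot_of_disjoint x hxb hxa := by
    have sup_inf_le : (x ⊔ c) ⊓ a ≤ x :=
      calc (x ⊔ c) ⊓ a ≤ (x ⊔ c) ⊓ b := inf_le_inf_left _ hab
        _ = x ⊔ c ⊓ b := sup_inf_assoc_of_le c hxb
        _ = x := by rw [hbc.symm.eq_bot, sup_bot_eq]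
    have disjoint_sup : Disjoint (x ⊔ c) a :=
      disjoint_iff_inf_le.2 ((le_inf sup_inf_le inf_le_right).trans hxa.le_bot)
    have hxc : x ≤ c := le_sup_left.trans (hc.le_of_ge disjoint_sup le_sup_right)
    exact le_bot_iff.1 (hbc hxb hxc)

end Lattice

section Modules

variable {R} {M N : Type*} [AddCommGroup M] [Module R M] [AddCommGroup N] [Module R N]

open Submodule

namespace IsEssentialIn

theorem comap {S A : Submodule R N} (h : IsEssentialIn S A) (f : M →ₗ[R] N) :
    IsEssentialIn (S.comap f) (A.comap f) where
  le := comap_mono h.le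
  eq_bot_of_disjoint X hXA hXS := by
    have disjoint_map : Disjoint (X.map f) S := by
      rw [Submodule.disjoint_def] at hXS ⊢
      rintro _ ⟨x, hx, rfl⟩ hxS
      rw [hXS x hx hxS, map_zero]
    have map_eq_bot : X.map f = ⊥ := h.eq_bot_of_disjoint _ (map_le_iff_le_comap.2 hXA) disjoint_map
    have hX : X ≤ S.comap f := map_le_iff_le_comap.1 (map_eq_bot.trans_le bot_le)
    exact hXS.eq_bot_of_le hX

theorem injective_of_injective_comp_inclusion {S A : Submodule R M} (h : IsEssentialIn S A)
    {f : A →ₗ[R] N} (hf : Function.Injective (f ∘ₗ inclusion h.le)) : Function.Injective f := by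
  have disjoint_ker : Disjoint ((LinearMap.ker f).map A.subtype) S := by
    rw [Submodule.disjoint_def]
    rintro _ ⟨a, ha, rfl⟩ haS
    have : (⟨a, haS⟩ : S) = 0 := hf <| by
      rw [map_zero]
      exact ha
    exact congrArg Subtype.val this
  have map_ker : (LinearMap.ker f).map A.subtype = ⊥ :=
    h.eq_bot_of_disjoint _ (map_subtype_le _ _) disjoint_ker
  rw [← LinearMap.ker_eq_bot]
  exact map_injective_of_injective A.subtype_injective (map_ker.trans (Submodule.map_bot _).symm)

end IsEssentialIn

theorem isCompl_comap_map_of_leftInverse {q : M →ₗ[R] N} {i : N →ₗ[R] M}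
    (hqi : Function.LeftInverse q i) {H K : Submodule R N} (h : IsCompl H K) :
    IsCompl (H.comap q) (K.map i) where
  disjoint := by
    rw [Submodule.disjoint_def]
    rintro _ hkH ⟨k, hk, rfl⟩
    rw [mem_comap, hqi] at hkH
    rw [Submodule.disjoint_def.1 h.disjoint k hkH hk, map_zero]
  codisjoint := by
    rw [Submodule.codisjoint_iff_exists_add_eq]
    intro x
    obtain ⟨y, k, hy, hk, hyk⟩ := Submodule.codisjoint_iff_exists_add_eq.1 h.codisjoint (q x)
    have hxk : q (x - i k) = y := by rw [map_sub, hqi, ← hyk, add_sub_cancel_right]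
    exact ⟨x - i k, i k, mem_comap.2 (hxk ▸ hy), mem_map_of_mem hk, sub_add_cancel x (i k)⟩

theorem exists_comap_map_eq_self (u q : M →ₗ[R] N) :
    ∃ S : Submodule R M, (S.map u).comap q = S :=
  let Φ : Submodule R M →o Submodule R M :=
    ⟨fun X ↦ (X.map u).comap q, fun _ _ h ↦ comap_mono (map_mono h)⟩
  ⟨Φ.lfp, Φ.map_lfp⟩

end Modules

section InjectiveModules

variable {R} {M N : Type v} [AddCommGroup M] [Module R M] [AddCommGroup N] [Module R N]

open Submodule

/-- Uniqueness of injective hulls. -/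
theorem IsEssentialIn.nonempty_linearEquiv {S A : Submodule R M} {T B : Submodule R N}
    [Module.Injective R A] [Module.Injective R B]
    (hSA : IsEssentialIn S A) (hTB : IsEssentialIn T B) (e : S ≃ₗ[R] T) :
    Nonempty (A ≃ₗ[R] B) := by
  obtain ⟨g, hg⟩ := Module.Injective.out (inclusion hSA.le) (inclusion_injective hSA.le)
    (inclusion hTB.le ∘ₗ e.toLinearMap)
  have g_injective : Function.Injective g := hSA.injective_of_injective_comp_inclusion <| by
    rw [show g ∘ₗ inclusion hSA.le = inclusion hTB.le ∘ₗ e.toLinearMap from LinearMap.ext hg]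
    exact (inclusion_injective hTB.le).comp e.injective
  obtain ⟨h, hh⟩ := Module.Injective.out g g_injective LinearMap.id
  have h_comp : h ∘ₗ inclusion hTB.le = inclusion hSA.le ∘ₗ e.symm.toLinearMap := by
    ext t
    have hgt : g (inclusion hSA.le (e.symm t)) = inclusion hTB.le t := by simp [hg]
    simp [← hgt, hh]
  have h_injective : Function.Injective h := hTB.injective_of_injective_comp_inclusion <| by
    rw [h_comp]
    exact (inclusion_injective hSA.le).comp e.symm.injective
  have g_surjective : Function.Surjective g :=
    (Function.LeftInverse.rightInverse_of_injective hh h_injective).surjective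
  exact ⟨LinearEquiv.ofBijective g ⟨g_injective, g_surjective⟩⟩

theorem moduleInjective_of_isCompl [Module.Injective R M] {H K : Submodule R M} (h : IsCompl H K) :
    Module.Injective R H where
  out _ _ _ _ _ _ f hf g := by
    obtain ⟨l, hl⟩ := Module.Injective.out f hf (H.subtype ∘ₗ g)
    exact ⟨H.projectionOnto K h ∘ₗ l, fun x ↦ by simp [hl]⟩

theorem exists_linearMap_eq_self_of_disjoint [Module.Injective R M] {H K : Submodule R M}
    (h : Disjoint H K) : ∃ p : M →ₗ[R] M, (∀ x ∈ H, p x = x) ∧ K ≤ LinearMap.ker p := by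
  have mkQ_injective : Function.Injective (K.mkQ.domRestrict H) :=
    LinearMap.injective_domRestrict_iff.2 (by rwa [ker_mkQ])
  obtain ⟨g, hg⟩ := Module.Injective.out _ mkQ_injective H.subtype
  refine ⟨g ∘ₗ K.mkQ, fun x hx ↦ hg ⟨x, hx⟩, fun x hx ↦ ?_⟩
  simp [(Submodule.Quotient.mk_eq_zero K).2 hx]

theorem isCompl_of_maximal_disjoint [Module.Injective R M] {H K : Submodule R M}
    (hH : Maximal (Disjoint · K) H) (hK : Maximal (Disjoint · H) K) : IsCompl H K := by
  obtain ⟨p, hpH, hpK⟩ := exists_linearMap_eq_self_of_disjoint hH.prop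
  have comap_le : K.comap p ≤ K := by
    refine hK.le_of_ge ?_ fun k hk ↦ by simp [LinearMap.mem_ker.1 (hpK hk)]
    rw [Submodule.disjoint_def]
    intro x hxK hxH
    rw [mem_comap, hpH x hxH] at hxK
    exact Submodule.disjoint_def.1 hH.prop x hxH hxK
  have range_le : LinearMap.range p ≤ H := by
    refine hH.le_of_ge ?_ fun x hx ↦ ⟨x, hpH x hx⟩
    rw [Submodule.disjoint_def]
    rintro _ ⟨x, rfl⟩ hx
    exact hpK (comap_le hx)
  have ker_eq : LinearMap.ker p = K := le_antisymm ((LinearMap.ker_le_comap p).trans comap_le) hpK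
  have isProj : LinearMap.IsProj H p := ⟨fun x ↦ range_le ⟨x, rfl⟩, hpH⟩
  exact ker_eq ▸ isProj.isCompl

theorem exists_isCompl_isEssentialIn [Module.Injective R M] (T : Submodule R M) :
    ∃ H K : Submodule R M, IsCompl H K ∧ IsEssentialIn T H := by
  obtain ⟨K, -, hK⟩ := exists_le_maximal_disjoint (disjoint_bot_left (a := T))
  obtain ⟨H, hTH, hH⟩ := exists_le_maximal_disjoint hK.prop.symm
  have hKH : Maximal (Disjoint · H) K := ⟨hH.prop.symm, fun _ hY ↦ hK.le_of_ge (hY.mono_right hTH)⟩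
  exact ⟨H, K, isCompl_of_maximal_disjoint hH hKH, isEssentialIn_of_maximal_disjoint hK hTH hH.prop⟩

theorem stmt5_general [Module.Injective R M] [Module.Injective R N] {i : N →ₗ[R] M}
    (hi : Function.Injective i) {u : M →ₗ[R] N} (hu : Function.Injective u) :
    Nonempty (M ≃ₗ[R] N) := by
  obtain ⟨q, hqi⟩ := Module.Injective.out i hi LinearMap.id
  obtain ⟨S, hS⟩ := exists_comap_map_eq_self u q
  obtain ⟨H, K, hHK, hH⟩ := exists_isCompl_isEssentialIn (S.map u)
  have isCompl_comap : IsCompl (H.comap q) (K.map i) := isCompl_comap_map_of_leftInverse hqi hHK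
  have essential_comap : IsEssentialIn S (H.comap q) := hS ▸ hH.comap q
  have := moduleInjective_of_isCompl hHK
  have := moduleInjective_of_isCompl isCompl_comap
  obtain ⟨e⟩ := essential_comap.nonempty_linearEquiv hH (S.equivMapOfInjective u hu)
  exact ⟨(prodEquivOfIsCompl _ _ isCompl_comap).symm ≪≫ₗ
    e.prodCongr (K.equivMapOfInjective i hi).symm ≪≫ₗ prodEquivOfIsCompl _ _ hHK⟩

theorem IsInjectiveModule.moduleInjective {E : Type u} [AddCommGroup E] [Module R E]
    (hE : IsInjectiveModule R E) : Module.Injective R E where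
  out A B _ _ _ _ i hi f := by
    obtain ⟨g, hg⟩ := hE A B i hi f
    exact ⟨g, LinearMap.congr_fun hg⟩

end InjectiveModules

/-- If `E` is injective, `E'` is an injective submodule of `E`, and there is an injective
`R`-linear map `u : E → E'`, then `E ≅ E'`. -/
theorem stmt5 (E : Type u) [AddCommGroup E] [Module R E] (hE : IsInjectiveModule R E)
    (E' : Submodule R E) (hE' : IsInjectiveModule R E')
    (u : E →ₗ[R] E') (hu : Function.Injective u) :
    Nonempty (E ≃ₗ[R] E') := by
  have := hE.moduleInjective
  have := hE'.moduleInjective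
  exact stmt5_general E'.subtype_injective hu
end

section
/- Let R be a ring, let E be a pure-injective right R-module and let E′ be a pure-injective pure submodule of E. If there exists a pure monomorphism u : E → E′, then E ≅ E′. -/
/-!
Corollary 2.5(2). "Right R-modules" are formalized as Lean `Module R` modules
(the theory is side-symmetric).
-/

universe u

variable (R : Type u) [Ring R]

/-- `f : A → B` is a pure monomorphism. We use the standard equational criterion
(solvability of finite linear systems descends from `B` to `A`), which for arbitrary
(possibly noncommutative) rings is equivalent to injectivity of `f ⊗ 1_C` for all
modules `C` on the other side. -/
def IsPureMono {A B : Type u} [AddCommGroup A] [Module R A] [AddCommGroup B] [Module R B]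
    (f : A →ₗ[R] B) : Prop :=
  Function.Injective f ∧
    ∀ (m n : ℕ) (r : Fin m → Fin n → R) (a : Fin m → A),
      (∃ y : Fin n → B, ∀ i, ∑ j, r i j • y j = f (a i)) →
      ∃ x : Fin n → A, ∀ i, ∑ j, r i j • x j = a i

/-- `E` is pure-injective: for every pure monomorphism `i : A → B`, every homomorphism
`A → E` extends to a homomorphism `B → E`. -/
def IsPureInjective (E : Type u) [AddCommGroup E] [Module R E] : Prop :=
  ∀ (A B : Type u) [AddCommGroup A] [Module R A] [AddCommGroup B] [Module R B]
    (i : A →ₗ[R] B), IsPureMono R i → ∀ f : A →ₗ[R] E, ∃ g : B →ₗ[R] E, g ∘ₗ i = f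

/-!
A pure-injective module `N` is a direct summand of each of its reduced powers, so families of
endomorphisms of `N` have limits along filters. This compactness gives every subset `Q` of `N` a
hull, that is, a direct summand containing `Q` all of whose endomorphisms over `Q` are bijective:
Zorn's lemma yields a minimal left ideal `S f` of the monoid `S` of endomorphisms of `N` over `Q`,
then an element of `S f` with a maximal set of fixed points, and the latter is a projection onto a
hull.

Write `E = C × E'`, where `E'` is a retract of `E` and `E` is a retract of `E'` through
`u : C × E' → E'`. Let `X` be a hull of the union `Q` of the copies `u C`, `u (u C)`, … of `C`
in `E'`. Since `Q = u C ∪ u Q`, the map `u` induces an isomorphism `C × X ≃ X`, so the summand `X`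
of `E'` absorbs `C`.
-/

section

open Filter Set MulAction

variable {R}

section Germ

variable {M I : Type*} [AddCommGroup M] [Module R M] {l : Filter I}

/-- The diagonal embedding of a module into its reduced power along the filter `l`. -/
def germConst (l : Filter I) : M →ₗ[R] Germ l M where
  toFun m := (m : Germ l M)
  map_add' _ _ := rfl
  map_smul' _ _ := rfl

theorem exists_solution_of_germ [l.NeBot] {m n : ℕ} (r : Fin m → Fin n → R) (a : Fin m → M)
    (y : Fin n → Germ l M) (hy : ∀ i, ∑ j, r i j • y j = germConst (R := R) l (a i)) :
    ∃ x : Fin n → M, ∀ i, ∑ j, r i j • x j = a i := by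
  choose Y hY using fun j => (y j).inductionOn (p := fun z => ∃ Y : I → M, z = Y) fun Y => ⟨Y, rfl⟩
  have hlift : ∀ i, ∀ᶠ k in l, (∑ j, r i j • Y j) k = a i := fun i => Germ.coe_eq.1 <| by
    rw [Germ.coe_sum]
    simp only [Germ.coe_smul, ← hY]
    exact hy i
  obtain ⟨k, hk⟩ := (eventually_all.2 hlift).exists
  exact ⟨fun j => Y j k, fun i => by simpa using hk i⟩

end Germ

theorem isPureMono_germConst {M I : Type u} [AddCommGroup M] [Module R M] (l : Filter I)
    [l.NeBot] : IsPureMono R (germConst l : M →ₗ[R] Germ l M) :=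
  ⟨fun _ _ h => Germ.const_inj.1 h, fun _ _ r a ⟨y, hy⟩ => exists_solution_of_germ r a y hy⟩

theorem IsPureInjective.exists_germ_retraction {M I : Type u} [AddCommGroup M] [Module R M]
    (hM : IsPureInjective R M) (l : Filter I) [l.NeBot] :
    ∃ L : Germ l M →ₗ[R] M, L ∘ₗ germConst l = LinearMap.id :=
  hM _ _ _ (isPureMono_germConst l) LinearMap.id

variable (R) in
/-- The monoid of endomorphisms of `M` over the subset `Q`, that is, fixing `Q` pointwise. -/
abbrev EndOver {M : Type*} [AddCommGroup M] [Module R M] (Q : Set M) : Submonoid (Module.End R M) :=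
  fixingSubmonoid (Module.End R M) Q

section LimEndOver

variable {M I : Type*} [AddCommGroup M] [Module R M] {l : Filter I} {L : Germ l M →ₗ[R] M}
  {Q : Set M}

theorem retraction_apply_of_eventually (hL : L ∘ₗ germConst l = LinearMap.id) {f : I → M} {y : M}
    (h : ∀ᶠ i in l, f i = y) : L f = y :=
  (congrArg L (Germ.coe_eq.2 h)).trans (LinearMap.congr_fun hL y)

/-- The pointwise limit of a family of endomorphisms over `Q`, where the limit of a family of
elements is given by a retraction `L` of the diagonal embedding into the reduced power. -/
def limEndOver (hL : L ∘ₗ germConst l = LinearMap.id) (F : I → EndOver R Q) : EndOver R Q where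
  val :=
    { toFun x := L ((fun i => F i • x : I → M) : Germ l M)
      map_add' x y := by
        rw [← map_add, ← Germ.coe_add]
        exact congrArg (fun f : I → M => L f) (funext fun i => smul_add (F i) x y)
      map_smul' c x := by
        rw [RingHom.id_apply, ← map_smul, ← Germ.coe_smul]
        exact congrArg (fun f : I → M => L f) (funext fun i => smul_comm (F i) c x) }
  property x := retraction_apply_of_eventually hL (.of_forall fun i => (F i).2 x)

theorem limEndOver_smul_of_eventually (hL : L ∘ₗ germConst l = LinearMap.id)
    {F : I → EndOver R Q} {x y : M} (h : ∀ᶠ i in l, F i • x = y) : limEndOver hL F • x = y :=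
  retraction_apply_of_eventually hL h

theorem limEndOver_congr (hL : L ∘ₗ germConst l = LinearMap.id) {F G : I → EndOver R Q}
    (h : F =ᶠ[l] G) : limEndOver hL F = limEndOver hL G :=
  Subtype.ext <| LinearMap.ext fun x => congrArg L (Germ.coe_eq.2 (h.fun_comp (· • x)))

theorem limEndOver_mul_const (hL : L ∘ₗ germConst l = LinearMap.id) (F : I → EndOver R Q)
    (f : EndOver R Q) : limEndOver hL (fun i => F i * f) = limEndOver hL F * f :=
  rfl

theorem limEndOver_mem_orbit (hL : L ∘ₗ germConst l = LinearMap.id) {F : I → EndOver R Q}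
    {f : EndOver R Q} (hF : ∀ᶠ i in l, F i ∈ orbit (EndOver R Q) f) :
    limEndOver hL F ∈ orbit (EndOver R Q) f := by
  have hfactor : ∀ i, ∃ h : EndOver R Q, F i ∈ orbit (EndOver R Q) f → h * f = F i := fun i => by
    by_cases hi : F i ∈ orbit (EndOver R Q) f
    · exact hi.imp fun h hh _ => hh
    · exact ⟨1, fun hi' => absurd hi' hi⟩
  choose H hH using hfactor
  rw [← limEndOver_congr hL (hF.mono hH), limEndOver_mul_const]
  exact mem_orbit f (limEndOver hL H)

end LimEndOver

section Hull

variable {N : Type u} [AddCommGroup N] [Module R N]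

theorem IsPureInjective.exists_minimal_orbit (hN : IsPureInjective R N) (Q : Set N) :
    ∃ f : EndOver R Q, Minimal (· ∈ range (orbit (EndOver R Q))) (orbit (EndOver R Q) f) := by
  have hbdd : ∀ c ⊆ range (orbit (EndOver R Q) (α := EndOver R Q)), IsChain (· ⊆ ·) c →
      c.Nonempty → ∃ s ∈ range (orbit (EndOver R Q)), ∀ t ∈ c, s ⊆ t := by
    intro c hcS hc hne
    have := hne.to_subtype
    have : IsCodirectedOrder c :=
      ⟨fun s t => (hc.total s.2 t.2).elim (⟨s, le_rfl, ·⟩) (⟨t, ·, le_rfl⟩)⟩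
    obtain ⟨L, hL⟩ := hN.exists_germ_retraction (atBot : Filter c)
    choose F hF using fun s : c => hcS s.2
    refine ⟨_, mem_range_self (limEndOver hL F), fun s hs => ?_⟩
    have hlim : limEndOver hL F ∈ orbit (EndOver R Q) (F ⟨s, hs⟩) := by
      refine limEndOver_mem_orbit hL ((eventually_le_atBot ⟨s, hs⟩).mono fun t ht => ?_)
      rw [hF ⟨s, hs⟩]
      exact ht (hF t ▸ mem_orbit_self (F t))
    obtain ⟨h, hh⟩ := hlim
    calc orbit (EndOver R Q) (limEndOver hL F)
        = orbit (EndOver R Q) (h • F ⟨s, hs⟩) := by rw [← hh]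
      _ ⊆ orbit (EndOver R Q) (F ⟨s, hs⟩) := orbit_smul_subset h _
      _ = s := hF ⟨s, hs⟩
  obtain ⟨_, -, hmin⟩ := zorn_superset_nonempty _ hbdd _ (mem_range_self 1)
  obtain ⟨f, rfl⟩ := hmin.1
  exact ⟨f, hmin⟩

theorem IsPureInjective.exists_maximal_fixedBy (hN : IsPureInjective R N) {Q : Set N}
    (f : EndOver R Q) :
    ∃ e ∈ orbit (EndOver R Q) f,
      Maximal (· ∈ fixedBy N '' orbit (EndOver R Q) f) (fixedBy N e) := by
  have hbdd : ∀ c ⊆ fixedBy N '' orbit (EndOver R Q) f, IsChain (· ⊆ ·) c → c.Nonempty →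
      ∃ s ∈ fixedBy N '' orbit (EndOver R Q) f, ∀ t ∈ c, t ⊆ s := by
    intro c hcS hc hne
    have := hne.to_subtype
    have : IsDirectedOrder c := hc.directedOn.isDirectedOrder
    obtain ⟨L, hL⟩ := hN.exists_germ_retraction (atTop : Filter c)
    choose F hFf hF using fun s : c => hcS s.2
    refine ⟨_, mem_image_of_mem _ (limEndOver_mem_orbit hL (.of_forall hFf)), fun s hs x hx => ?_⟩
    refine limEndOver_smul_of_eventually hL ((eventually_ge_atTop ⟨s, hs⟩).mono fun t ht => ?_)
    exact (hF t).symm.subset (ht hx)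
  obtain ⟨_, -, hmax⟩ := zorn_subset_nonempty _ hbdd _ (mem_image_of_mem _ (mem_orbit_self f))
  obtain ⟨e, he, rfl⟩ := hmax.1
  exact ⟨e, he, hmax⟩

theorem exists_mul_mul_eq_of_minimal_orbit {S : Type*} [Monoid S] {f e : S}
    (hf : Minimal (· ∈ range (orbit S)) (orbit S f)) (he : e ∈ orbit S f) (g : S) :
    ∃ h, h * g * e = e := by
  obtain ⟨k, rfl⟩ := he
  obtain ⟨h, hh⟩ := hf.2 (mem_range_self ((g * k) • f)) (orbit_smul_subset _ f) (mem_orbit_self f)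
  refine ⟨k * h, ?_⟩
  simpa [mul_assoc] using congrArg (k * ·) hh

theorem IsPureInjective.exists_isIdempotentElem (hN : IsPureInjective R N) (Q : Set N) :
    ∃ e : EndOver R Q, IsIdempotentElem e ∧ ∀ g : EndOver R Q, ∃ h, h * g * e = e := by
  obtain ⟨f, hf⟩ := hN.exists_minimal_orbit Q
  obtain ⟨e, he, hmax⟩ := hN.exists_maximal_fixedBy f
  have hinv := exists_mul_mul_eq_of_minimal_orbit hf he
  refine ⟨e, ?_, hinv⟩
  obtain ⟨h, hh⟩ := hinv e
  have hsub : fixedBy N e ⊆ fixedBy N (h * e) := fun x hx => by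
    have hx' : e • x = x := hx
    calc (h * e) • x = (h * e) • e • x := by rw [hx']
      _ = x := by rw [smul_smul, hh, hx']
  have hsup := hmax.2 (mem_image_of_mem _ (mem_orbit_of_mem_orbit h he)) hsub
  refine Subtype.ext <| LinearMap.ext fun x => hsup (?_ : (h * e) • e • x = e • x)
  rw [smul_smul, hh]

/-- `X` is a hull of `Q` in `N`: a direct summand containing `Q` all of whose endomorphisms
over `Q` are bijective. It plays the role of a pure-injective envelope of `Q`, without requiring `Q`
to be a pure submodule. -/
structure IsHull {N : Type*} [AddCommGroup N] [Module R N] (Q : Set N) (X : Submodule R N) :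
    Prop where
  subset : Q ⊆ X
  exists_isCompl : ∃ Y, IsCompl X Y
  bijective : ∀ g : X →ₗ[R] X, (∀ x : X, (x : N) ∈ Q → g x = x) → Function.Bijective g

theorem forall_isUnit_of_exists_mul_eq_one {S : Type*} [Monoid S] (h : ∀ g : S, ∃ k, k * g = 1)
    (g : S) : IsUnit g := by
  obtain ⟨k, hk⟩ := h g
  obtain ⟨k', hk'⟩ := h k
  obtain rfl : k' = g := left_inv_eq_right_inv hk' hk
  exact ⟨⟨k', k, hk', hk⟩, rfl⟩

theorem exists_mul_eq_one_endOver_range {M : Type*} [AddCommGroup M] [Module R M] {Q : Set M}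
    {e : EndOver R Q} (he : IsIdempotentElem e) (hinv : ∀ g : EndOver R Q, ∃ h, h * g * e = e)
    (g : EndOver R ((↑) ⁻¹' Q : Set (LinearMap.range e.1))) : ∃ k, k * g = 1 := by
  let X := LinearMap.range e.1
  let p : M →ₗ[R] X := e.1.rangeRestrict
  have hp : ∀ x : X, p x = x := by
    rintro ⟨_, y, rfl⟩
    exact Subtype.ext ((mul_smul e e y).symm.trans (congrArg (· • y) he))
  have hpQ : ∀ x : Q, (p x : M) = x := e.2
  have hgQ : ∀ x : Q, (g.1 (p x) : M) = x := fun x => by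
    have hmem : p x ∈ ((↑) ⁻¹' Q : Set X) := by simp [hpQ]
    exact (congrArg Subtype.val (g.2 ⟨p x, hmem⟩)).trans (hpQ x)
  obtain ⟨h, hh⟩ := hinv ⟨X.subtype ∘ₗ g.1 ∘ₗ p, hgQ⟩
  have hleft : ∀ x : X, h.1 (g.1 x) = x := fun x => by
    have hex : e.1 x = x := congrArg Subtype.val (hp x)
    simpa [hex, hp, p] using congrArg (fun k : EndOver R Q => k.1 x) hh
  refine ⟨⟨p ∘ₗ h.1 ∘ₗ X.subtype, fun x => ?_⟩, ?_⟩
  · exact (congrArg p (h.2 ⟨x, x.2⟩)).trans (hp x)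
  · exact Subtype.ext <| LinearMap.ext fun x => (congrArg p (hleft x)).trans (hp x)

theorem isHull_range {M : Type*} [AddCommGroup M] [Module R M] {Q : Set M}
    {e : EndOver R Q} (he : IsIdempotentElem e) (hinv : ∀ g : EndOver R Q, ∃ h, h * g * e = e) :
    IsHull Q (LinearMap.range e.1) where
  subset x hx := ⟨x, e.2 ⟨x, hx⟩⟩
  exists_isCompl := ⟨_, LinearMap.IsIdempotentElem.isCompl (congrArg Subtype.val he)⟩
  bijective g hg := by
    have hunit := forall_isUnit_of_exists_mul_eq_one (exists_mul_eq_one_endOver_range he hinv)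
      ⟨g, fun x => hg x x.2⟩
    exact (Module.End.isUnit_iff g).1 (hunit.map (EndOver R _).subtype)

theorem IsPureInjective.exists_isHull (hN : IsPureInjective R N) (Q : Set N) :
    ∃ X : Submodule R N, IsHull Q X := by
  obtain ⟨e, he, hinv⟩ := hN.exists_isIdempotentElem Q
  exact ⟨_, isHull_range he hinv⟩

end Hull

section Absorb

variable {C N : Type*} [AddCommGroup C] [Module R C] [AddCommGroup N] [Module R N]

/-- The union of the iterated copies `u C`, `u (u C)`, … of `C` in `N`, where `C` and `N` are
identified with `C × 0` and `0 × N`. It is the set whose hull absorbs `C`. -/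
inductive iteratedCopies (u : C × N →ₗ[R] N) : Set N
  | base (c : C) : iteratedCopies u (u (c, 0))
  | step {y : N} (hy : iteratedCopies u y) : iteratedCopies u (u (0, y))

theorem surjective_of_unitriangular {X : Type*} [AddCommGroup X] [Module R X]
    {T : C × X →ₗ[R] C × X} (hC : ∀ c, T (c, 0) = (c, 0))
    (hX : Function.Surjective fun x => (T (0, x)).2) : Function.Surjective T := by
  rintro ⟨c, x⟩
  obtain ⟨y, hy⟩ := hX x
  refine ⟨(c - (T (0, y)).1, 0) + (0, y), ?_⟩
  rw [map_add, hC]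
  exact Prod.ext (sub_add_cancel _ _) (by simpa using hy)

theorem IsHull.nonempty_linearEquiv_prod {u : C × N →ₗ[R] N} {v : N →ₗ[R] C × N}
    (hvu : Function.LeftInverse v u) {X : Submodule R N} (hX : IsHull (iteratedCopies u) X) :
    Nonempty (X ≃ₗ[R] C × X) := by
  obtain ⟨Y, hXY⟩ := hX.exists_isCompl
  let p : N →ₗ[R] X := X.projectionOnto Y hXY
  have hp : ∀ x : X, p x = x := X.projectionOnto_apply_left hXY
  let a : C × X →ₗ[R] X := p ∘ₗ u ∘ₗ LinearMap.prodMap LinearMap.id X.subtype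
  let b : X →ₗ[R] C × X := LinearMap.prodMap LinearMap.id p ∘ₗ v ∘ₗ X.subtype
  have ha : ∀ (c : C) (x : X), u (c, x) ∈ X → (a (c, x) : N) = u (c, x) := fun c x h =>
    congrArg Subtype.val (hp ⟨_, h⟩)
  have hb : ∀ (x : X) (c : C) (y : X), (x : N) = u (c, y) → b x = (c, y) := fun x c y h => by
    simp [b, h, hvu (c, (y : N)), hp]
  have hdecomp : ∀ x ∈ iteratedCopies u, ∃ (c : C) (y : X), x = u (c, y) := by
    rintro _ (c | ⟨hy⟩)
    exacts [⟨c, 0, rfl⟩, ⟨0, ⟨_, hX.subset hy⟩, rfl⟩]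
  have hab : Function.Bijective (a ∘ₗ b) := hX.bijective _ fun x hx => by
    obtain ⟨c, y, hxy⟩ := hdecomp x hx
    rw [LinearMap.comp_apply, hb x c y hxy]
    exact Subtype.ext ((ha c y (hxy ▸ x.2)).trans hxy.symm)
  have hba_base : ∀ c, b (a (c, 0)) = (c, 0) := fun c =>
    hb _ c 0 (ha c 0 (hX.subset (iteratedCopies.base c)))
  have hba_step : ∀ x : X, (x : N) ∈ iteratedCopies u → b (a (0, x)) = (0, x) := fun x hx =>
    hb _ 0 x (ha 0 x (hX.subset (iteratedCopies.step hx)))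
  have hba : Function.Surjective (b ∘ₗ a) :=
    surjective_of_unitriangular hba_base
      (hX.bijective (LinearMap.snd R C X ∘ₗ b ∘ₗ a ∘ₗ LinearMap.inr R C X)
        fun x hx => congrArg Prod.snd (hba_step x hx)).2
  exact ⟨.ofBijective b ⟨.of_comp (f := a) hab.1, .of_comp (g := a) hba⟩⟩

end Absorb

theorem IsPureInjective.nonempty_prod_linearEquiv {C : Type*} {N : Type u} [AddCommGroup C]
    [Module R C] [AddCommGroup N] [Module R N] (hN : IsPureInjective R N) {u : C × N →ₗ[R] N}
    {v : N →ₗ[R] C × N} (hvu : Function.LeftInverse v u) : Nonempty ((C × N) ≃ₗ[R] N) := by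
  obtain ⟨X, hX⟩ := hN.exists_isHull (iteratedCopies u)
  obtain ⟨Y, hXY⟩ := hX.exists_isCompl
  obtain ⟨absorb⟩ := hX.nonempty_linearEquiv_prod hvu
  let split : (X × Y) ≃ₗ[R] N := X.prodEquivOfIsCompl Y hXY
  exact ⟨(LinearEquiv.refl R C).prodCongr split.symm ≪≫ₗ (LinearEquiv.prodAssoc R C X Y).symm ≪≫ₗ
    absorb.symm.prodCongr (.refl R Y) ≪≫ₗ split⟩

end

/-- If `E` is pure-injective, `E'` is a pure-injective pure submodule of `E`, and there is
a pure monomorphism `u : E → E'`, then `E ≅ E'`. -/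
theorem stmt6 (E : Type u) [AddCommGroup E] [Module R E] (hE : IsPureInjective R E)
    (E' : Submodule R E) (hE'pi : IsPureInjective R E') (hE'pure : IsPureMono R E'.subtype)
    (u : E →ₗ[R] E') (hu : IsPureMono R u) :
    Nonempty (E ≃ₗ[R] E') := by
  obtain ⟨q, hq⟩ := hE'pi _ _ _ hE'pure LinearMap.id
  obtain ⟨v, hv⟩ := hE _ _ _ hu LinearMap.id
  have hcompl : IsCompl (LinearMap.ker q) E' :=
    (LinearMap.isCompl_of_proj (LinearMap.congr_fun hq)).symm
  let split : (LinearMap.ker q × E') ≃ₗ[R] E := Submodule.prodEquivOfIsCompl _ _ hcompl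
  obtain ⟨absorb⟩ := hE'pi.nonempty_prod_linearEquiv (u := u ∘ₗ split.toLinearMap)
    (v := split.symm.toLinearMap ∘ₗ v) fun z =>
      split.symm_apply_eq.2 (LinearMap.congr_fun hv (split z))
  exact ⟨split.symm ≪≫ₗ absorb⟩
end

section
/- Let R be a ring, let E be a flat cotorsion right R-module and let E′ be a pure submodule of E such that E′ is also flat and cotorsion. If there exists a pure monomorphism u : E → E′, then E ≅ E′. -/
/-!
Corollary 2.5(3). "Right R-modules" are formalized as Lean `Module R` modules
(the theory is side-symmetric).
-/

universe u

variable (R : Type u) [Ring R]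

/-- `F` is a flat `R`-module: every surjection onto `F` has pure kernel, i.e. every short
exact sequence `0 → K → L → F → 0` is pure. (For arbitrary rings this is equivalent to the
tensor-product definition of flatness.) -/
def IsFlatModule (F : Type u) [AddCommGroup F] [Module R F] : Prop :=
  ∀ (L : Type u) [AddCommGroup L] [Module R L] (p : L →ₗ[R] F),
    Function.Surjective p → IsPureMono R (LinearMap.ker p).subtype

/-- `M` is cotorsion, i.e. `Ext¹_R(F, M) = 0` for every flat `R`-module `F`: equivalently,
every monomorphism out of `M` with flat cokernel splits. -/
def IsCotorsionModule (M : Type u) [AddCommGroup M] [Module R M] : Prop :=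
  ∀ (L : Type u) [AddCommGroup L] [Module R L] (v : M →ₗ[R] L),
    Function.Injective v → IsFlatModule R (L ⧸ LinearMap.range v) →
    ∃ p : L →ₗ[R] M, p ∘ₗ v = LinearMap.id

/-!
Let `X → E` be a monomorphism with flat cokernel into a cotorsion module. The endomorphisms of `E`
fixing `X` form a monoid in which every chain of maps has a cocone: the cokernel of `X` in the
direct limit is still flat, so `X → E` extends to the limit. By a cardinality argument such a monoid
has an idempotent `e` generating a minimal left ideal. Its corner monoid is a group, so the range of
`e` is a cotorsion envelope of `X` and a direct summand of `E`.

In the theorem both inclusions split, so `E ≅ C × E'` is a retract of `E'`. Iterating the retraction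
embeds `C^(ℕ)` purely into `E'`, and the cotorsion envelope `L` of `C^(ℕ)` is a summand of `E'`.
Since `C × C^(ℕ) ≅ C^(ℕ)`, uniqueness of envelopes gives `C × L ≅ L`, hence `C × E' ≅ E'`.
-/

section Monoid

variable {T : Type u} [Monoid T]

/-- A chain-shaped diagram in `T`, regarded as a category with one object: `f i j` is the transition
map from stage `i` to stage `j`. Only the values `f i j` with `i ≤ j` are meaningful. -/
structure IsChainSystem {I : Type u} [LinearOrder I] (f : I → I → T) : Prop where
  map_self : ∀ i, f i i = 1
  map_map : ∀ ⦃i j k⦄, i ≤ j → j ≤ k → f j k * f i j = f i k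

/-- A cocone `g` under the diagram `f` in the one-object category `T`. -/
def IsChainCocone {I : Type u} [LinearOrder I] (f : I → I → T) (g : I → T) : Prop :=
  ∀ ⦃i j⦄, i ≤ j → g j * f i j = g i

variable (T) in
/-- Every chain-shaped diagram in the one-object category `T` has a cocone. This is all that the
existence of envelopes needs to know about the endomorphisms of a cotorsion module. -/
def HasChainCocones : Prop :=
  ∀ (I : Type u) [LinearOrder I] (f : I → I → T), IsChainSystem f → ∃ g, IsChainCocone f g

/-- The left ideal `T b` is minimal: every `s * b` generates it. -/
def IsLeftMinimal (b : T) : Prop :=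
  ∀ s, ∃ t, t * (s * b) = b

theorem IsLeftMinimal.mul_right {b : T} (hb : IsLeftMinimal b) (a : T) :
    IsLeftMinimal (b * a) := by
  intro s
  obtain ⟨t, ht⟩ := hb s
  exact ⟨t, by rw [← mul_assoc s, ← mul_assoc t, ht]⟩

theorem IsLeftMinimal.exists_inverse_in_corner {e x : T} (hmin : IsLeftMinimal e)
    (he : IsIdempotentElem e) (hex : e * x = x) (hxe : x * e = x) :
    ∃ y, y * x = e ∧ x * y = e := by
  have exists_left_inverse :
      ∀ x, e * x = x → x * e = x → ∃ y, e * y = y ∧ y * e = y ∧ y * x = e := by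
    intro x hex hxe
    obtain ⟨t, ht⟩ := hmin x
    rw [hxe] at ht
    refine ⟨e * t * e, ?_, ?_, ?_⟩
    · rw [← mul_assoc, ← mul_assoc, he.eq]
    · rw [mul_assoc, he.eq]
    · rw [mul_assoc, hex, mul_assoc, ht, he.eq]
  obtain ⟨y, hey, hye, hyx⟩ := exists_left_inverse x hex hxe
  obtain ⟨z, -, hze, hzy⟩ := exists_left_inverse y hey hye
  have hzx : z = x := by rw [← hze, ← hyx, ← mul_assoc, hzy, hex]
  exact ⟨y, hyx, hzx ▸ hzy⟩

theorem exists_transition_recursion {α : Type*} {I : Type*} [LinearOrder I] [WellFoundedLT I]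
    (diag : α) (next : ∀ j : I, (Set.Iio j → Set.Iio j → α) → Set.Iio j → α) :
    ∃ f : I → I → α, ∀ j, f j j = diag ∧
      ∀ i : Set.Iio j, f i j = next j (fun a b => f a b) i := by
  let step (j : I) (F : ∀ k, k < j → I → α) (i : I) : α :=
    if hij : i < j then next j (fun a b => F b b.2 a) ⟨i, hij⟩ else diag
  let F : I → I → α := wellFounded_lt.fix step
  have hF : ∀ j, F j = step j fun k _ => F k := wellFounded_lt.fix_eq step
  exact ⟨fun i j => F j i, fun j => ⟨(congrFun (hF j) j).trans (dif_neg (lt_irrefl j)),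
    fun i => (congrFun (hF j) i).trans (dif_pos i.2)⟩⟩

theorem HasChainCocones.exists_isChainSystem (hT : HasChainCocones T) {I : Type u} [LinearOrder I]
    [WellFoundedLT I] (ρ : ∀ j : I, (Set.Iio j → T) → T) :
    ∃ f : I → I → T, IsChainSystem f ∧ ∀ j, ∃ g : Set.Iio j → T,
      IsChainCocone (fun a b : Set.Iio j => f a b) g ∧ ∀ i : Set.Iio j, f i j = ρ j g * g i := by
  classical
  obtain ⟨f, hf⟩ := exists_transition_recursion 1 fun (j : I) (h : Set.Iio j → Set.Iio j → T) =>
    if hg : ∃ g, IsChainCocone h g then fun i => ρ j hg.choose * hg.choose i else 1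
  have key : ∀ k, (∀ ⦃i j⦄, i ≤ j → j ≤ k → f j k * f i j = f i k) ∧
      ∃ g : Set.Iio k → T, IsChainCocone (fun a b : Set.Iio k => f a b) g ∧
        ∀ i : Set.Iio k, f i k = ρ k g * g i := by
    intro k
    induction k using WellFoundedLT.induction with
    | ind k ih =>
    have hg : ∃ g : Set.Iio k → T, IsChainCocone (fun a b : Set.Iio k => f a b) g :=
      hT _ _ ⟨fun i => (hf i).1, fun i j l hij hjl => (ih l l.2).1 hij hjl⟩
    have hfk : ∀ i : Set.Iio k, f i k = ρ k hg.choose * hg.choose i := fun i => by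
      rw [(hf k).2 i, dif_pos hg]
    refine ⟨fun i j hij hjk => ?_, hg.choose, hg.choose_spec, hfk⟩
    rcases hjk.eq_or_lt with rfl | hjk
    · rw [(hf j).1, one_mul]
    · rw [hfk ⟨j, hjk⟩, hfk ⟨i, hij.trans_lt hjk⟩, mul_assoc]
      exact congrArg _ (hg.choose_spec (i := ⟨i, hij.trans_lt hjk⟩) (j := ⟨j, hjk⟩) hij)
  exact ⟨f, ⟨fun i => (hf i).1, fun i j k => @(key k).1 i j⟩, fun j => (key j).2⟩

theorem exists_wellOrder_forall_exists_lt_eq (T : Type u) :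
    ∃ (I : Type u) (_ : LinearOrder I) (_ : OrderBot I) (_ : WellFoundedLT I),
      ∀ g : I → T, ∃ i j, i < j ∧ g i = g j := by
  obtain ⟨_, hwf⟩ := exists_wellFoundedLT (Set T)
  refine ⟨Set T, _, WellFoundedLT.toOrderBot _, hwf, fun g => ?_⟩
  by_contra! hg
  refine Function.cantor_injective g fun i j hij => ?_
  by_contra hne
  exact (lt_or_gt_of_ne hne).elim (hg i j · hij) (hg j i · hij.symm)

-- If no `b` were left minimal, each stage could be chosen so that `T * f ⊥ j` strictly decreases.
theorem HasChainCocones.exists_isLeftMinimal (hT : HasChainCocones T) :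
    ∃ b : T, IsLeftMinimal b := by
  by_contra! hno
  have hshrink : ∀ b : T, ∃ s, ∀ t, t * (s * b) ≠ b := by
    simpa only [IsLeftMinimal, not_forall, not_exists] using hno
  choose s hs using hshrink
  obtain ⟨I, _, _, _, hI⟩ := exists_wellOrder_forall_exists_lt_eq T
  obtain ⟨f, -, hf⟩ := hT.exists_isChainSystem fun (j : I) g =>
    if hj : ⊥ < j then s (g ⟨⊥, hj⟩) else 1
  obtain ⟨i, j, hij, heq⟩ := hI (f ⊥)
  obtain ⟨g, hg, hfg⟩ := hf j
  have hj : ⊥ < j := bot_le.trans_lt hij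
  have hfj : f ⊥ j = s (g ⟨⊥, hj⟩) * g ⟨⊥, hj⟩ := by simpa only [hj, dite_true] using hfg ⟨⊥, hj⟩
  refine hs (g ⟨⊥, hj⟩) (g ⟨i, hij⟩) ?_
  rw [← hfj, ← heq]
  exact hg (i := ⟨⊥, hj⟩) (j := ⟨i, hij⟩) bot_le

theorem HasChainCocones.exists_isIdempotentElem_isLeftMinimal (hT : HasChainCocones T) :
    ∃ e : T, IsIdempotentElem e ∧ IsLeftMinimal e := by
  obtain ⟨b, hb⟩ := hT.exists_isLeftMinimal
  obtain ⟨I, _, _, _, hI⟩ := exists_wellOrder_forall_exists_lt_eq T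
  obtain ⟨f, hf, hfb⟩ := hT.exists_isChainSystem fun (_ : I) _ => b
  obtain ⟨g, hg⟩ := hT I f hf
  obtain ⟨i, j, hij, heq⟩ := hI g
  have hmin : IsLeftMinimal (f i j) := by
    obtain ⟨g', -, hfg'⟩ := hfb j
    rw [hfg' ⟨i, hij⟩]
    exact hb.mul_right _
  have habsorb : g j * f i j = g j := (hg hij.le).trans heq
  obtain ⟨y, hy⟩ := hmin (g j)
  have hyg : y * g j = f i j := habsorb ▸ hy
  refine ⟨f i j, ?_, hmin⟩
  calc f i j * f i j = y * (g j * f i j) := by rw [← mul_assoc, hyg]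
    _ = f i j := hy

end Monoid

section Flat

variable {R}
variable {F G : Type u} [AddCommGroup F] [Module R F] [AddCommGroup G] [Module R G]

-- Pull a surjection `p : L → F` back along `φ`: its kernel does not change, and it becomes pure.
theorem IsFlatModule.of_factor
    (hF : ∀ (m n : ℕ) (r : Fin m → Fin n → R) (z : Fin n → F), (∀ i, ∑ j, r i j • z j = 0) →
      ∃ (G : Type u) (_ : AddCommGroup G) (_ : Module R G) (φ : G →ₗ[R] F) (y : Fin n → G),
        IsFlatModule R G ∧ (∀ j, φ (y j) = z j) ∧ ∀ i, ∑ j, r i j • y j = 0) :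
    IsFlatModule R F := by
  intro L _ _ p hp
  refine ⟨Subtype.val_injective, ?_⟩
  rintro m n r a ⟨x, hx⟩
  obtain ⟨G, _, _, φ, y, hG, hφ, hy⟩ := hF m n r (p ∘ x) fun i => by
    simpa only [map_sum, map_smul, Function.comp_apply] using (congrArg p (hx i)).trans (a i).2
  let P : Submodule R (L × G) := LinearMap.eqLocus (p ∘ₗ .fst R L G) (φ ∘ₗ .snd R L G)
  let π : P →ₗ[R] G := .snd R L G ∘ₗ P.subtype
  have hπ : Function.Surjective π := fun g => by
    obtain ⟨l, hl⟩ := hp (φ g)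
    exact ⟨⟨(l, g), hl⟩, rfl⟩
  let a' (i : Fin m) : LinearMap.ker π := ⟨⟨(a i, 0), (a i).2.trans (map_zero φ).symm⟩, rfl⟩
  let x' (j : Fin n) : P := ⟨(x j, y j), (hφ j).symm⟩
  have hx' (i) : ∑ j, r i j • x' j = a' i := by
    ext
    · simpa [x', a', Prod.fst_sum] using hx i
    · simpa [x', a', Prod.snd_sum] using hy i
  obtain ⟨w, hw⟩ := (hG P π hπ).2 m n r a' ⟨x', hx'⟩
  have hpw (j) : p (w j).1.1.1 = 0 := by
    rw [show p (w j).1.1.1 = φ (w j).1.1.2 from (w j).1.2, show (w j).1.1.2 = 0 from (w j).2,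
      map_zero]
  refine ⟨fun j => ⟨(w j).1.1.1, hpw j⟩, fun i => Subtype.ext ?_⟩
  simpa [a', Prod.fst_sum] using congrArg (fun v => v.1.1.1) (hw i)

theorem IsFlatModule.of_retract (hG : IsFlatModule R G) (i : F →ₗ[R] G) (p : G →ₗ[R] F)
    (hpi : p ∘ₗ i = .id) : IsFlatModule R F :=
  .of_factor fun _ _ _ z hz => ⟨G, _, _, p, fun j => i (z j), hG,
    fun j => LinearMap.congr_fun hpi (z j),
    fun k => by simpa only [map_sum, map_smul, map_zero] using congrArg i (hz k)⟩

theorem sum_smul_mkQ_eq_zero_iff {n : Type*} [Fintype n] {N : Submodule R F} {r : n → R}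
    {y : n → F} : ∑ j, r j • N.mkQ (y j) = 0 ↔ ∑ j, r j • y j ∈ N := by
  rw [← N.ker_mkQ, LinearMap.mem_ker, N.ker_mkQ, map_sum]
  simp only [map_smul]

theorem IsFlatModule.quotient_range {f : G →ₗ[R] F} (hF : IsFlatModule R F)
    (hf : IsPureMono R f) : IsFlatModule R (F ⧸ LinearMap.range f) := by
  refine .of_factor fun m n r z hz => ?_
  obtain ⟨y, rfl⟩ := (Submodule.mkQ_surjective _).comp_left z
  choose a ha using fun i => sum_smul_mkQ_eq_zero_iff.1 (hz i)
  obtain ⟨x, hx⟩ := hf.2 m n r a ⟨y, fun i => (ha i).symm⟩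
  refine ⟨F, _, _, Submodule.mkQ _, fun j => y j - f (x j), hF, fun j => ?_, fun i => ?_⟩
  · exact (Submodule.Quotient.eq _).2 ⟨-x j, by rw [map_neg, sub_sub_cancel_left]⟩
  · simp only [smul_sub, Finset.sum_sub_distrib, ← map_smul, ← map_sum, hx, ha, sub_self]

theorem IsFlatModule.quotient_of_retract {N : Submodule R F} {N' : Submodule R G}
    (h : IsFlatModule R (G ⧸ N')) (i : F →ₗ[R] G) (p : G →ₗ[R] F) (hi : N ≤ N'.comap i)
    (hp : N' ≤ N.comap p) (hpi : ∀ x, p (i x) - x ∈ N) : IsFlatModule R (F ⧸ N) := by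
  refine h.of_retract (N.mapQ N' i hi) (N'.mapQ N p hp) (Submodule.linearMap_qext _ ?_)
  ext x
  exact (Submodule.Quotient.eq N).2 (hpi x)

end Flat

section FlatMono

variable {R}
variable {C X Y L E : Type u} [AddCommGroup C] [Module R C] [AddCommGroup X] [Module R X]
  [AddCommGroup Y] [Module R Y] [AddCommGroup L] [Module R L] [AddCommGroup E] [Module R E]

/-- A monomorphism with flat cokernel: the maps along which homomorphisms into cotorsion modules
extend. -/
structure IsFlatMono (f : X →ₗ[R] Y) : Prop where
  injective : Function.Injective f
  isFlatModule : IsFlatModule R (Y ⧸ LinearMap.range f)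

theorem IsPureMono.isFlatMono {f : X →ₗ[R] Y} (hf : IsPureMono R f) (hY : IsFlatModule R Y) :
    IsFlatMono f :=
  ⟨hf.1, hY.quotient_range hf⟩

theorem IsFlatMono.of_retract {f : X →ₗ[R] Y} (hf : IsFlatMono f) {l : X →ₗ[R] L} (i : L →ₗ[R] Y)
    (p : Y →ₗ[R] L) (hil : i ∘ₗ l = f) (hpi : p ∘ₗ i = .id) : IsFlatMono l := by
  subst hil
  have hpi' (x) : p (i x) = x := LinearMap.congr_fun hpi x
  refine ⟨.of_comp hf.injective, hf.isFlatModule.quotient_of_retract i p ?_ ?_ fun x => ?_⟩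
  · rintro _ ⟨x, rfl⟩
    exact ⟨x, rfl⟩
  · rintro _ ⟨x, rfl⟩
    exact ⟨x, (hpi' _).symm⟩
  · rw [hpi', sub_self]
    exact zero_mem _

variable (C) in
theorem IsFlatMono.id_prodMap {l : X →ₗ[R] L} (hl : IsFlatMono l) :
    IsFlatMono (LinearMap.prodMap (.id : C →ₗ[R] C) l) := by
  refine ⟨Function.injective_id.prodMap hl.injective,
    hl.isFlatModule.quotient_of_retract (.snd R C L) (.inr R C L) ?_ ?_ fun z => ?_⟩
  · rintro _ ⟨x, rfl⟩
    exact ⟨x.2, rfl⟩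
  · rintro _ ⟨x, rfl⟩
    exact ⟨(0, x), rfl⟩
  · exact ⟨(-z.1, 0), by ext <;> simp⟩

theorem IsFlatMono.pushout_inr {j : X →ₗ[R] Y} (hj : IsFlatMono j) (φ : X →ₗ[R] E) :
    IsFlatMono ((LinearMap.range (j.prod (-φ))).mkQ ∘ₗ .inr R Y E) := by
  let N : Submodule R (Y × E) := LinearMap.range (j.prod (-φ))
  let v : E →ₗ[R] (Y × E) ⧸ N := N.mkQ ∘ₗ .inr R Y E
  let inl : Y ⧸ LinearMap.range j →ₗ[R] ((Y × E) ⧸ N) ⧸ LinearMap.range v :=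
    (LinearMap.range j).mapQ (LinearMap.range v) (N.mkQ ∘ₗ .inl R Y E) <| by
      rintro _ ⟨x, rfl⟩
      exact ⟨φ x, (Submodule.Quotient.eq N).2 ⟨-x, by ext <;> simp⟩⟩
  let fst : ((Y × E) ⧸ N) ⧸ LinearMap.range v →ₗ[R] Y ⧸ LinearMap.range j :=
    (LinearMap.range v).liftQ (N.mapQ (LinearMap.range j) (.fst R Y E) (by
        rintro _ ⟨x, rfl⟩
        exact ⟨x, rfl⟩)) (by
      rintro _ ⟨e, rfl⟩
      exact map_zero (Submodule.mkQ _))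
  refine ⟨(injective_iff_map_eq_zero v).2 fun e he => ?_, hj.isFlatModule.of_retract fst inl ?_⟩
  · obtain ⟨x, hx⟩ := (Submodule.Quotient.mk_eq_zero N).1 he
    obtain ⟨hjx, hφx⟩ : j x = 0 ∧ -φ x = e := Prod.ext_iff.1 hx
    rw [← hφx, (map_eq_zero_iff j hj.injective).1 hjx, map_zero, neg_zero]
  · refine Submodule.linearMap_qext _ (Submodule.linearMap_qext _ (LinearMap.prod_ext rfl ?_))
    ext e
    exact (map_zero inl).trans
      ((Submodule.Quotient.mk_eq_zero (LinearMap.range v)).2 ⟨e, rfl⟩).symm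

theorem IsCotorsionModule.exists_extend (hE : IsCotorsionModule R E) {j : X →ₗ[R] Y}
    (hj : IsFlatMono j) (φ : X →ₗ[R] E) : ∃ ψ : Y →ₗ[R] E, ψ ∘ₗ j = φ := by
  obtain ⟨hv, hflat⟩ := hj.pushout_inr φ
  obtain ⟨p, hp⟩ := hE _ _ hv hflat
  refine ⟨p ∘ₗ Submodule.mkQ _ ∘ₗ .inl R Y E, LinearMap.ext fun x => ?_⟩
  have glue : Submodule.mkQ (LinearMap.range (j.prod (-φ))) (j x, 0) = Submodule.mkQ _ (0, φ x) :=
    (Submodule.Quotient.eq _).2 ⟨x, by ext <;> simp⟩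
  exact (congrArg p glue).trans (LinearMap.congr_fun hp (φ x))

theorem IsCotorsionModule.of_retract (hE : IsCotorsionModule R E) (i : L →ₗ[R] E) (p : E →ₗ[R] L)
    (hpi : p ∘ₗ i = .id) : IsCotorsionModule R L := by
  intro Y _ _ v hv hflat
  obtain ⟨ψ, hψ⟩ := hE.exists_extend ⟨hv, hflat⟩ i
  exact ⟨p ∘ₗ ψ, by rw [LinearMap.comp_assoc, hψ, hpi]⟩

theorem IsCotorsionModule.prod (hC : IsCotorsionModule R C) (hE : IsCotorsionModule R E) :
    IsCotorsionModule R (C × E) := by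
  intro Y _ _ v hv hflat
  obtain ⟨ψ₁, hψ₁⟩ := hC.exists_extend ⟨hv, hflat⟩ (.fst R C E)
  obtain ⟨ψ₂, hψ₂⟩ := hE.exists_extend ⟨hv, hflat⟩ (.snd R C E)
  exact ⟨ψ₁.prod ψ₂, by rw [LinearMap.prod_comp, hψ₁, hψ₂, LinearMap.pair_fst_snd]⟩

end FlatMono

section DirectLimit

variable {R}
variable {I : Type u} [Preorder I] [IsDirectedOrder I] [DecidableEq I]
  {G : I → Type u} [∀ i, AddCommGroup (G i)] [∀ i, Module R (G i)]
  {f : ∀ i j, i ≤ j → G i →ₗ[R] G j}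

theorem exists_directLimit_of_eq_of_finite [Nonempty I] {n : Type*} [Finite n]
    (z : n → Module.DirectLimit G f) :
    ∃ i, ∃ x : n → G i, ∀ k, Module.DirectLimit.of R I G f i (x k) = z k := by
  choose i x hx using fun k => Module.DirectLimit.exists_of (z k)
  obtain ⟨j, hj⟩ := Finite.exists_le i
  exact ⟨j, fun k => f _ _ (hj k) (x k), fun k => by rw [Module.DirectLimit.of_f, hx]⟩

variable {X : Type u} [AddCommGroup X] [Module R X] {ι : ∀ i, X →ₗ[R] G i}

theorem directLimit_of_comp_eq (hf : ∀ i j hij, f i j hij ∘ₗ ι i = ι j) (i j : I) :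
    Module.DirectLimit.of R I G f i ∘ₗ ι i = Module.DirectLimit.of R I G f j ∘ₗ ι j := by
  obtain ⟨k, hik, hjk⟩ := exists_ge_ge i j
  have of_f {l m : I} (hlm : l ≤ m) :
      Module.DirectLimit.of R I G f m ∘ₗ f l m hlm = Module.DirectLimit.of R I G f l :=
    LinearMap.ext fun _ => Module.DirectLimit.of_f
  rw [← of_f hik, ← of_f hjk, LinearMap.comp_assoc, LinearMap.comp_assoc, hf, hf]

variable [DirectedSystem G (f · · ·)]

theorem exists_directLimit_transition_eq_of_finite {n : Type*} [Finite n] {i : I} {x y : n → G i}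
    (hxy : ∀ k, Module.DirectLimit.of R I G f i (x k) = Module.DirectLimit.of R I G f i (y k)) :
    ∃ j, ∃ hij : i ≤ j, ∀ k, f i j hij (x k) = f i j hij (y k) := by
  choose l hil hl using fun k => Module.DirectLimit.exists_eq_of_of_eq (hxy k)
  have : Nonempty I := ⟨i⟩
  obtain ⟨m, hm⟩ := Finite.exists_le l
  obtain ⟨j, hij, hmj⟩ := exists_ge_ge i m
  refine ⟨j, hij, fun k => ?_⟩
  have hlj := (hm k).trans hmj
  rw [← DirectedSystem.map_map' (f := (f · · ·)) (hil k) hlj, hl,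
    DirectedSystem.map_map' (f := (f · · ·))]

-- A finite linear system in the limit of the cokernels is already one at some stage.
theorem IsFlatMono.directLimit_of_comp (hι : ∀ i, IsFlatMono (ι i))
    (hf : ∀ i j hij, f i j hij ∘ₗ ι i = ι j) (i₀ : I) :
    IsFlatMono (Module.DirectLimit.of R I G f i₀ ∘ₗ ι i₀) := by
  have hfι {i j} (hij) (x : X) : f i j hij (ι i x) = ι j x := LinearMap.congr_fun (hf i j hij) x
  have : Nonempty I := ⟨i₀⟩
  let of (i : I) := Module.DirectLimit.of R I G f i
  have of_ι (i x) : of i (ι i x) = of i₀ (ι i₀ x) :=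
    LinearMap.congr_fun (directLimit_of_comp_eq hf i i₀) x
  refine ⟨fun a b hab => ?_, .of_factor fun m n r z hz => ?_⟩
  · obtain ⟨j, hij, hj⟩ := Module.DirectLimit.exists_eq_of_of_eq hab
    exact (hι j).injective (by rwa [hfι, hfι] at hj)
  · obtain ⟨y, rfl⟩ := (Submodule.mkQ_surjective _).comp_left z
    obtain ⟨k, x, hx⟩ := exists_directLimit_of_eq_of_finite y
    choose a ha using fun i => sum_smul_mkQ_eq_zero_iff.1 (hz i)
    have hrel (i) : of k (ι k (a i)) = of k (∑ j, r i j • x j) := by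
      rw [of_ι, map_sum]
      simpa only [map_smul, of, hx, LinearMap.comp_apply] using ha i
    obtain ⟨l, hkl, hl⟩ := exists_directLimit_transition_eq_of_finite hrel
    let φ := (LinearMap.range (ι l)).mapQ (LinearMap.range (of i₀ ∘ₗ ι i₀)) (of l) <| by
      rintro _ ⟨b, rfl⟩
      exact ⟨b, (of_ι l b).symm⟩
    refine ⟨_, _, _, φ, fun j => Submodule.mkQ _ (f k l hkl (x j)), (hι l).isFlatModule,
      fun j => congrArg (Submodule.mkQ _) (Module.DirectLimit.of_f.trans (hx j)),
      fun i => sum_smul_mkQ_eq_zero_iff.2 ⟨a i, ?_⟩⟩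
    rw [← hfι hkl, hl, map_sum]
    simp only [map_smul]

end DirectLimit

section Envelope

variable {R}
variable {C X Y L L' E : Type u} [AddCommGroup C] [Module R C] [AddCommGroup X] [Module R X]
  [AddCommGroup Y] [Module R Y]
  [AddCommGroup L] [Module R L] [AddCommGroup L'] [Module R L'] [AddCommGroup E] [Module R E]

theorem mem_fixingSubmonoid_range_iff {ι : X →ₗ[R] E} {g : Module.End R E} :
    g ∈ fixingSubmonoid (Module.End R E) (Set.range ι) ↔ g ∘ₗ ι = ι := by
  simp only [mem_fixingSubmonoid_iff, Set.forall_mem_range, Module.End.smul_def,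
    LinearMap.ext_iff, LinearMap.comp_apply]

theorem IsFlatMono.hasChainCocones {ι : X →ₗ[R] E} (hι : IsFlatMono ι)
    (hE : IsCotorsionModule R E) :
    HasChainCocones (fixingSubmonoid (Module.End R E) (Set.range ι)) := by
  classical
  intro I _ f hf
  rcases isEmpty_or_nonempty I with _ | ⟨⟨i₀⟩⟩
  · exact ⟨1, fun i => isEmptyElim i⟩
  let φ (i j : I) (_ : i ≤ j) : E →ₗ[R] E := f i j
  have : DirectedSystem (fun _ : I => E) (φ · · ·) :=
    { map_self i x := by simp [φ, hf.map_self]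
      map_map k j i hij hjk x := by simp [φ, ← hf.map_map hij hjk] }
  have hφ (i j : I) (hij : i ≤ j) : φ i j hij ∘ₗ ι = ι :=
    mem_fixingSubmonoid_range_iff.1 (f i j).2
  let of (i : I) := Module.DirectLimit.of R I (fun _ => E) φ i
  obtain ⟨ψ, hψ⟩ := hE.exists_extend (.directLimit_of_comp (fun _ => hι) hφ i₀) ι
  have hfix (i) : (ψ ∘ₗ of i) ∘ₗ ι = ι := by
    rw [LinearMap.comp_assoc, directLimit_of_comp_eq hφ i i₀, hψ]
  exact ⟨fun i => ⟨ψ ∘ₗ of i, mem_fixingSubmonoid_range_iff.2 (hfix i)⟩, fun i j hij =>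
    Subtype.ext (LinearMap.ext fun _ => congrArg ψ (Module.DirectLimit.of_f (hij := hij)))⟩

/-- `l : X → L` is a cotorsion envelope: a monomorphism with flat cokernel into a cotorsion module
which is minimal, in that every endomorphism of `L` fixing `X` is bijective. -/
structure IsCotorsionEnvelope (l : X →ₗ[R] L) : Prop where
  isFlatMono : IsFlatMono l
  isCotorsionModule : IsCotorsionModule R L
  bijective : ∀ g : L →ₗ[R] L, g ∘ₗ l = l → Function.Bijective g

-- The summand is the range of a left minimal idempotent `ε` fixing `X`: endomorphisms of `range ε`
-- fixing `X` live in the corner monoid of `ε`, which is a group.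
theorem IsFlatMono.exists_isCotorsionEnvelope {ι : X →ₗ[R] E} (hι : IsFlatMono ι)
    (hE : IsCotorsionModule R E) :
    ∃ L M : Submodule R E, IsCompl L M ∧ ∃ l : X →ₗ[R] L, IsCotorsionEnvelope l := by
  obtain ⟨⟨ε, hε⟩, hidem, hmin⟩ :=
    (hι.hasChainCocones hE).exists_isIdempotentElem_isLeftMinimal
  rw [mem_fixingSubmonoid_range_iff] at hε
  have hεε : IsIdempotentElem ε := congrArg Subtype.val hidem
  let i := (LinearMap.range ε).subtype
  let p := ε.rangeRestrict
  have hpi (b : LinearMap.range ε) : p b = b := by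
    obtain ⟨_, x, rfl⟩ := b
    exact Subtype.ext (LinearMap.congr_fun hεε x)
  have hipι : i ∘ₗ p ∘ₗ ι = ι := hε
  refine ⟨LinearMap.range ε, LinearMap.ker ε, LinearMap.IsIdempotentElem.isCompl hεε, p ∘ₗ ι,
    hι.of_retract i p hipι (LinearMap.ext hpi), hE.of_retract i p (LinearMap.ext hpi),
    fun g hg => ?_⟩
  have hx : (i ∘ₗ g ∘ₗ p) ∘ₗ ι = ι := by
    rw [LinearMap.comp_assoc, LinearMap.comp_assoc, hg, hipι]
  obtain ⟨y, hyx, hxy⟩ := hmin.exists_inverse_in_corner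
    (x := ⟨i ∘ₗ g ∘ₗ p, mem_fixingSubmonoid_range_iff.2 hx⟩) hidem
    (Subtype.ext <| LinearMap.ext fun e => congrArg Subtype.val (hpi (g (p e))))
    (Subtype.ext <| LinearMap.ext fun e => congrArg (fun v => (g v : E)) (hpi (p e)))
  have hyg (b) : p (y.1 (g b)) = b :=
    calc p (y.1 (g b)) = p (y.1 (i (g (p b)))) := by rw [hpi]; rfl
      _ = p (i (p b)) := congrArg p (LinearMap.congr_fun (congrArg Subtype.val hyx) b)
      _ = b := (hpi (p b)).trans (hpi b)
  have hgy (b : LinearMap.range ε) : g (p (y.1 b)) = b :=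
    Subtype.ext <|
      calc i (g (p (y.1 b))) = i (p b) := LinearMap.congr_fun (congrArg Subtype.val hxy) b
        _ = b := congrArg i (hpi b)
  exact Function.bijective_iff_has_inverse.2 ⟨fun b => p (y.1 b), hyg, hgy⟩

theorem IsCotorsionEnvelope.nonempty_equiv {l : X →ₗ[R] L} {l' : X →ₗ[R] L'}
    (hl : IsCotorsionEnvelope l) (hl' : IsCotorsionEnvelope l') : Nonempty (L ≃ₗ[R] L') := by
  obtain ⟨g, hg⟩ := hl'.isCotorsionModule.exists_extend hl.isFlatMono l'
  obtain ⟨h, hh⟩ := hl.isCotorsionModule.exists_extend hl'.isFlatMono l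
  have hhg := hl.bijective (h ∘ₗ g) (by rw [LinearMap.comp_assoc, hg, hh])
  have hgh := hl'.bijective (g ∘ₗ h) (by rw [LinearMap.comp_assoc, hh, hg])
  exact ⟨.ofBijective g ⟨.of_comp hhg.injective, .of_comp hgh.surjective⟩⟩

theorem IsCotorsionEnvelope.comp_equiv {l : X →ₗ[R] L} (hl : IsCotorsionEnvelope l)
    (σ : Y ≃ₗ[R] X) : IsCotorsionEnvelope (l ∘ₗ σ.toLinearMap) := by
  refine ⟨⟨hl.isFlatMono.injective.comp σ.injective, ?_⟩, hl.isCotorsionModule, fun g hg => ?_⟩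
  · rw [LinearEquiv.range_comp]
    exact hl.isFlatMono.isFlatModule
  · exact hl.bijective g ((LinearMap.cancel_right σ.surjective).1 hg)

variable (C) in
-- An endomorphism fixing `C` and `X` has the form `(c, y) ↦ (c + α y, δ y)` with `δ` fixing `X`.
theorem IsCotorsionEnvelope.id_prodMap {l : X →ₗ[R] L} (hl : IsCotorsionEnvelope l)
    (hC : IsCotorsionModule R C) :
    IsCotorsionEnvelope (LinearMap.prodMap (.id : C →ₗ[R] C) l) := by
  refine ⟨hl.isFlatMono.id_prodMap C, hC.prod hl.isCotorsionModule, fun g hg => ?_⟩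
  let α : L →ₗ[R] C := .fst R C L ∘ₗ g ∘ₗ .inr R C L
  let δ : L →ₗ[R] L := .snd R C L ∘ₗ g ∘ₗ .inr R C L
  have hg' (c : C) (y : L) : g (c, y) = (c + α y, δ y) := by
    have hc : g (c, 0) = (c, 0) := by simpa using LinearMap.congr_fun hg (c, 0)
    calc g (c, y) = g (c, 0) + g (0, y) := by rw [← map_add, Prod.mk_add_mk, add_zero, zero_add]
      _ = (c + α y, δ y) := by rw [hc]; ext <;> simp [α, δ]
  have hδ : Function.Bijective δ := hl.bijective δ <| LinearMap.ext fun x => by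
    simpa [δ] using congrArg Prod.snd (LinearMap.congr_fun hg (0, x))
  refine ⟨(injective_iff_map_eq_zero g).2 ?_, ?_⟩
  · rintro ⟨c, y⟩ h
    obtain ⟨hc, hy⟩ := Prod.ext_iff.1 ((hg' c y).symm.trans h)
    obtain rfl : y = 0 := (map_eq_zero_iff δ hδ.injective).1 hy
    simpa using hc
  · rintro ⟨c, y⟩
    obtain ⟨y, rfl⟩ := hδ.surjective y
    exact ⟨(c - α y, y), by rw [hg', sub_add_cancel]⟩

end Envelope

section Absorption

variable {R}
variable {A B C M : Type u} [AddCommGroup A] [Module R A] [AddCommGroup B] [Module R B]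
  [AddCommGroup C] [Module R C] [AddCommGroup M] [Module R M]

theorem IsPureMono.of_forall_finset_exists_leftInverse {f : A →ₗ[R] B}
    (hf : ∀ s : Finset A, ∃ ρ : B →ₗ[R] A, ∀ a ∈ s, ρ (f a) = a) : IsPureMono R f := by
  classical
  refine ⟨fun a b hab => ?_, ?_⟩
  · obtain ⟨ρ, hρ⟩ := hf {a, b}
    rw [← hρ a (by simp), ← hρ b (by simp), hab]
  · rintro m n r a ⟨y, hy⟩
    obtain ⟨ρ, hρ⟩ := hf (Finset.univ.image a)
    refine ⟨fun j => ρ (y j), fun i => ?_⟩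
    rw [← hρ (a i) (Finset.mem_image_of_mem a (Finset.mem_univ i)), ← hy, map_sum]
    simp only [map_smul]

theorem IsPureMono.of_coordinates {I : Type} {f : (I →₀ C) →ₗ[R] B} (κ : I → B →ₗ[R] C)
    (hκ : ∀ i x, κ i (f x) = x i) : IsPureMono R f := by
  classical
  refine .of_forall_finset_exists_leftInverse fun s => ?_
  let S : Finset I := s.biUnion Finsupp.support
  refine ⟨∑ i ∈ S, Finsupp.lsingle i ∘ₗ κ i, fun x hx => ?_⟩
  have hsub : x.support ⊆ S := Finset.subset_biUnion_of_mem Finsupp.support hx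
  calc (∑ i ∈ S, Finsupp.lsingle i ∘ₗ κ i) (f x) = ∑ i ∈ S, Finsupp.single i (x i) := by
        simp only [LinearMap.sum_apply, LinearMap.comp_apply, hκ, Finsupp.lsingle_apply]
    _ = x.sum Finsupp.single :=
        (Finsupp.sum_of_support_subset x hsub _ fun _ _ => Finsupp.single_zero _).symm
    _ = x := x.sum_single

theorem apply_pow_apply_pow_apply {t w : Module.End R M} {i : C →ₗ[R] M} {π : M →ₗ[R] C}
    (htw : t * w = 1) (hti : t ∘ₗ i = 0) (hπw : π ∘ₗ w = 0) (hπi : π ∘ₗ i = .id) (m n : ℕ) (c : C) :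
    π ((t ^ n) ((w ^ m) (i c))) = if m = n then c else 0 := by
  have htw' (x) : t (w x) = x := LinearMap.congr_fun htw x
  have hti' (x) : t (i x) = 0 := LinearMap.congr_fun hti x
  have hπw' (x) : π (w x) = 0 := LinearMap.congr_fun hπw x
  have hπi' (x) : π (i x) = x := LinearMap.congr_fun hπi x
  induction n generalizing m with
  | zero => cases m <;> simp [pow_succ', hπw', hπi']
  | succ n ih =>
    cases m with
    | zero => simp [pow_succ, hti']
    | succ m => simpa [pow_succ t, pow_succ' w, htw'] using ih m

theorem isPureMono_lsum_pow {t w : Module.End R M} {i : C →ₗ[R] M} {π : M →ₗ[R] C}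
    (htw : t * w = 1) (hti : t ∘ₗ i = 0) (hπw : π ∘ₗ w = 0) (hπi : π ∘ₗ i = .id) :
    IsPureMono R (Finsupp.lsum ℕ fun n : ℕ => (w ^ n) ∘ₗ i) := by
  refine .of_coordinates (fun n => π ∘ₗ t ^ n) fun n x => ?_
  induction x using Finsupp.induction_linear with
  | zero => simp only [map_zero, Finsupp.zero_apply]
  | add x y hx hy => simp only [map_add, hx, hy, Finsupp.add_apply]
  | single m c =>
    rw [Finsupp.lsum_single, Finsupp.single_apply]
    exact apply_pow_apply_pow_apply htw hti hπw hπi m n c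

variable (R C) in
/-- Shifting the copies of `C` in `C^(ℕ)` makes room for one more. -/
noncomputable def prodFinsuppNatEquiv : (C × (ℕ →₀ C)) ≃ₗ[R] (ℕ →₀ C) :=
  .prodCongr (Finsupp.uniqueLinearEquiv R C Unit.unit).symm (.refl R _) ≪≫ₗ
    (Finsupp.sumFinsuppLEquivProdFinsupp R).symm ≪≫ₗ
    Finsupp.domLCongr ((Equiv.sumComm _ _).trans Equiv.natSumPUnitEquivNat)

theorem IsCotorsionModule.nonempty_prod_equiv_of_retract (hMflat : IsFlatModule R M)
    (hM : IsCotorsionModule R M) {s : C × M →ₗ[R] M} {r : M →ₗ[R] C × M} (hrs : r ∘ₗ s = .id) :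
    Nonempty ((C × M) ≃ₗ[R] M) := by
  have hrs' (z) : r (s z) = z := LinearMap.congr_fun hrs z
  let i : C →ₗ[R] M := s ∘ₗ .inl R C M
  let π : M →ₗ[R] C := .fst R C M ∘ₗ r
  have hπi : π ∘ₗ i = .id := by ext; simp [π, i, hrs']
  have htower := isPureMono_lsum_pow (t := .snd R C M ∘ₗ r) (w := s ∘ₗ .inr R C M)
    (by ext; simp [hrs']) (by ext; simp [i, hrs']) (by ext; simp [π, hrs']) hπi
  obtain ⟨L, N, hLN, l, hl⟩ := (htower.isFlatMono hMflat).exists_isCotorsionEnvelope hM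
  have hC : IsCotorsionModule R C := hM.of_retract i π hπi
  obtain ⟨e⟩ : Nonempty ((C × L) ≃ₗ[R] L) :=
    (hl.id_prodMap C hC).nonempty_equiv (hl.comp_equiv (prodFinsuppNatEquiv R C))
  let d : (L × N) ≃ₗ[R] M := Submodule.prodEquivOfIsCompl L N hLN
  exact ⟨.prodCongr (.refl R C) d.symm ≪≫ₗ (LinearEquiv.prodAssoc R C L N).symm ≪≫ₗ
    .prodCongr e (.refl R N) ≪≫ₗ d⟩

end Absorption

/-- If `E` is flat cotorsion, `E'` is a pure submodule of `E` which is also flat cotorsion,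
and there is a pure monomorphism `u : E → E'`, then `E ≅ E'`. -/
theorem stmt7 (E : Type u) [AddCommGroup E] [Module R E]
    (hEflat : IsFlatModule R E) (hEcot : IsCotorsionModule R E)
    (E' : Submodule R E) (hE'pure : IsPureMono R E'.subtype)
    (hE'flat : IsFlatModule R E') (hE'cot : IsCotorsionModule R E')
    (u : E →ₗ[R] E') (hu : IsPureMono R u) :
    Nonempty (E ≃ₗ[R] E') := by
  obtain ⟨p, hp⟩ := hE'cot E E'.subtype hE'pure.1 (hEflat.quotient_range hE'pure)
  obtain ⟨q, hq⟩ := hEcot E' u hu.1 (hE'flat.quotient_range hu)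
  have hcompl : IsCompl E' (LinearMap.ker p) := LinearMap.isCompl_of_proj (LinearMap.congr_fun hp)
  let d : E ≃ₗ[R] LinearMap.ker p × E' :=
    (E'.prodEquivOfIsCompl _ hcompl).symm ≪≫ₗ LinearEquiv.prodComm R _ _
  have hretract : (d.toLinearMap ∘ₗ q) ∘ₗ (u ∘ₗ d.symm.toLinearMap) = .id := by
    rw [LinearMap.comp_assoc, ← LinearMap.comp_assoc _ u, hq, LinearMap.id_comp, d.comp_symm]
  obtain ⟨absorb⟩ := hE'cot.nonempty_prod_equiv_of_retract hE'flat hretract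
  exact ⟨d ≪≫ₗ absorb⟩
end

section
/- Let R be a ring and let 𝒳 be a class of right R-modules closed under isomorphisms and direct summands such that every right R-module has a monomorphic 𝒳-envelope. If M is an 𝒳-endomorphism invariant right R-module and N is a direct summand of M, then N is 𝒳-endomorphism invariant. -/
/-!
Schröder-Bernstein problem for modules (Guil Asensio, Kaleboğaz, Srivastava).
We formalize "right R-modules" as Lean `Module R` modules (the theory is side-symmetric).
A class of modules is a predicate on modules (in a fixed universe `u`).
-/

universe u

variable (R : Type u) [Ring R]

/-- `M` is `𝒳`-endomorphism invariant: for every monomorphic `𝒳`-envelope `u : M → X`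
and every endomorphism `φ` of `X`, there is an endomorphism `f` of `M` with
`u ∘ f = φ ∘ u`. -/
def IsEndoInvariant (𝒳 : ModClass R) (M : Type u) [AddCommGroup M] [Module R M] : Prop :=
  ∀ (X : Type u) [AddCommGroup X] [Module R X] (u : M →ₗ[R] X),
    Function.Injective u → IsEnvelope R 𝒳 u →
    ∀ φ : X →ₗ[R] X, ∃ f : M →ₗ[R] M, u ∘ₗ f = φ ∘ₗ u

/-!
Let `v : N → Y` and `w : M → X` be envelopes, with `N` a direct summand of `M`. The inclusion and
the projection extend to maps `Y → X → Y` whose composite fixes `v`, hence is an automorphism;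
after correcting by its inverse, `v` becomes a retract of `w`. An endomorphism of `Y` can then be
transported to `X`, restricted to `M`, and compressed to `N`.
-/

section Retract

variable {S M N X Y : Type*} [Semiring S] [AddCommMonoid M] [Module S M] [AddCommMonoid N]
  [Module S N] [AddCommMonoid X] [Module S X] [AddCommMonoid Y] [Module S Y]

/-- `v : N → Y` is a retract of `w : M → X` in the category of linear maps and commutative
squares. This is how the envelope of a direct summand sits inside the envelope of the whole
module. -/
def IsRetractOf (v : N →ₗ[S] Y) (w : M →ₗ[S] X) : Prop :=
  ∃ (i : N →ₗ[S] M) (p : M →ₗ[S] N) (a : Y →ₗ[S] X) (b : X →ₗ[S] Y),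
    p ∘ₗ i = LinearMap.id ∧ b ∘ₗ a = LinearMap.id ∧ a ∘ₗ v = w ∘ₗ i ∧ b ∘ₗ w = v ∘ₗ p

theorem IsRetractOf.exists_comp_eq_comp {v : N →ₗ[S] Y} {w : M →ₗ[S] X} (hvw : IsRetractOf v w)
    (hw : ∀ ψ : X →ₗ[S] X, ∃ g : M →ₗ[S] M, w ∘ₗ g = ψ ∘ₗ w) (φ : Y →ₗ[S] Y) :
    ∃ f : N →ₗ[S] N, v ∘ₗ f = φ ∘ₗ v := by
  obtain ⟨i, p, a, b, hpi, hba, -, hbw⟩ := hvw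
  obtain ⟨g, hg⟩ := hw (a ∘ₗ φ ∘ₗ b)
  refine ⟨p ∘ₗ g ∘ₗ i, ?_⟩
  calc v ∘ₗ p ∘ₗ g ∘ₗ i
      = (b ∘ₗ w) ∘ₗ g ∘ₗ i := by rw [hbw, LinearMap.comp_assoc]
    _ = b ∘ₗ (w ∘ₗ g) ∘ₗ i := rfl
    _ = (b ∘ₗ a) ∘ₗ φ ∘ₗ (b ∘ₗ w) ∘ₗ i := by rw [hg]; rfl
    _ = φ ∘ₗ v ∘ₗ p ∘ₗ i := by rw [hba, hbw]; rfl
    _ = φ ∘ₗ v := by rw [hpi, LinearMap.comp_id]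

end Retract

section Envelope

variable {R} {𝒳 : ModClass R} {M N X Y : Type u} [AddCommGroup M] [Module R M] [AddCommGroup N]
  [Module R N] [AddCommGroup X] [Module R X] [AddCommGroup Y] [Module R Y]

theorem IsEnvelope.exists_leftInverse_comp_eq {v : N →ₗ[R] Y} (hv : IsEnvelope R 𝒳 v)
    {h : Y →ₗ[R] Y} (hh : h ∘ₗ v = v) :
    ∃ k : Y →ₗ[R] Y, k ∘ₗ h = LinearMap.id ∧ k ∘ₗ v = v := by
  let e : Y ≃ₗ[R] Y := LinearEquiv.ofBijective h (hv.2 h hh)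
  have he : e.symm.toLinearMap ∘ₗ h = LinearMap.id := e.symm_comp
  refine ⟨e.symm, he, ?_⟩
  calc e.symm.toLinearMap ∘ₗ v
      = (e.symm.toLinearMap ∘ₗ h) ∘ₗ v := by rw [LinearMap.comp_assoc, hh]
    _ = v := by rw [he, LinearMap.id_comp]

theorem IsEnvelope.isRetractOf {v : N →ₗ[R] Y} {w : M →ₗ[R] X} (hv : IsEnvelope R 𝒳 v)
    (hw : IsPreenvelope R 𝒳 w) (hNM : IsDirectSummandOf R N M) : IsRetractOf v w := by
  obtain ⟨i, p, hpi⟩ := hNM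
  obtain ⟨a, hav⟩ := hv.1.2 X hw.1 (w ∘ₗ i)
  obtain ⟨b, hbw⟩ := hw.2 Y hv.1.1 (v ∘ₗ p)
  have hbav : (b ∘ₗ a) ∘ₗ v = v := by
    rw [LinearMap.comp_assoc, hav, ← LinearMap.comp_assoc, hbw, LinearMap.comp_assoc, hpi,
      LinearMap.comp_id]
  obtain ⟨k, hk, hkv⟩ := hv.exists_leftInverse_comp_eq hbav
  have hkbw : (k ∘ₗ b) ∘ₗ w = v ∘ₗ p := by
    rw [LinearMap.comp_assoc, hbw, ← LinearMap.comp_assoc, hkv]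
  exact ⟨i, p, a, k ∘ₗ b, hpi, hk, hav, hkbw⟩

end Envelope

theorem stmt8_general (𝒳 : ModClass R) (M : Type u) [AddCommGroup M] [Module R M]
    (henv : ∃ (X : Type u) (_ : AddCommGroup X) (_ : Module R X) (w : M →ₗ[R] X),
      Function.Injective w ∧ IsEnvelope R 𝒳 w)
    (hM : IsEndoInvariant R 𝒳 M)
    (N : Type u) [AddCommGroup N] [Module R N] (hN : IsDirectSummandOf R N M) :
    IsEndoInvariant R 𝒳 N := by
  intro Y _ _ v _ hv
  obtain ⟨X, _, _, w, hw_inj, hw⟩ := henv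
  exact (hv.isRetractOf hw.1 hN).exists_comp_eq_comp (hM X w hw_inj hw)

/-- **Lemma 2.6.** A direct summand of an `𝒳`-endomorphism invariant module is
`𝒳`-endomorphism invariant. -/
theorem stmt8 (𝒳 : ModClass R) (hiso : ClosedUnderIsos R 𝒳)
    (hsum : ClosedUnderSummands R 𝒳) (henv : HasMonoEnvelopes R 𝒳)
    (M : Type u) [AddCommGroup M] [Module R M] (hM : IsEndoInvariant R 𝒳 M)
    (N : Type u) [AddCommGroup N] [Module R N] (hN : IsDirectSummandOf R N M) :
    IsEndoInvariant R 𝒳 N :=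
  stmt8_general R 𝒳 M (henv M) hM N hN
end

section
/- Let R be a ring and let M and N be quasi-injective right R-modules. If there is an injective R-linear map from M to N and an injective R-linear map from N to M, then M ≅ N. -/
/-!
Bumby's theorem for quasi-injective modules (Corollary 2.8(1)). "Right R-modules" are
formalized as Lean `Module R` modules (the theory is side-symmetric).
-/

universe u

variable (R : Type u) [Ring R]

/-- `N` is an essential submodule of `E`: every nonzero submodule of `E` meets `N`
nontrivially. -/
def IsEssentialSubmodule {E : Type u} [AddCommGroup E] [Module R E]
    (N : Submodule R E) : Prop :=
  ∀ K : Submodule R E, K ⊓ N = ⊥ → K = ⊥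

/-- `u : M → E` realizes `E` as an injective envelope of `M`: `E` is injective and `u`
embeds `M` as an essential submodule of `E`. -/
def IsInjectiveEnvelope (M E : Type u) [AddCommGroup M] [Module R M]
    [AddCommGroup E] [Module R E] (u : M →ₗ[R] E) : Prop :=
  IsInjectiveModule R E ∧ Function.Injective u ∧
    IsEssentialSubmodule R (LinearMap.range u)

/-- `M` is quasi-injective: `M` (viewed inside an injective envelope `E(M)`) satisfies
`φ(M) ⊆ M` for every endomorphism `φ` of `E(M)`. -/
def IsQuasiInjective (M : Type u) [AddCommGroup M] [Module R M] : Prop :=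
  ∃ (E : Type u) (_ : AddCommGroup E) (_ : Module R E) (u : M →ₗ[R] E),
    IsInjectiveEnvelope R M E u ∧
    ∀ φ : E →ₗ[R] E, ∀ x : M, φ (u x) ∈ LinearMap.range u

/-!
Let `E` and `F` be injective modules with injections `a : E → F` and `b : F → E`. Since `F` is
injective, `b` has a retraction `r`. As in the Cantor–Schröder–Bernstein argument, put
`X = ∑ₙ (b a)ⁿ (ker r)`; then `r` and `a` have the same image on `X`. If `K` is a maximal submodule
of `F` disjoint from `a X`, then `a X ⊕ K` is essential in `F`, and its preimage under `r`, which is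
`X ⊕ b K`, is essential in `E`. These two submodules are isomorphic, hence so are the injective
modules `F` and `E` that contain them essentially.

For quasi-injective `M` and `N`, the given injections extend to injections between the envelopes,
so the envelopes are isomorphic, and full invariance forces any such isomorphism to map `M` onto
`N`.
-/

theorem exists_maximal_disjoint {α : Type*} [CompleteLattice α] [IsCompactlyGenerated α] (a : α) :
    ∃ k, Maximal (Disjoint a) k :=
  zorn_le₀ {k | Disjoint a k} fun c hc hchain =>
    ⟨sSup c, hchain.directedOn.disjoint_sSup_right.2 fun _ hb => hc hb, fun _ hz => le_sSup hz⟩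

theorem eq_bot_of_maximal_disjoint_of_disjoint_sup {α : Type*} [Lattice α] [OrderBot α]
    [IsModularLattice α] {a k s : α} (hk : Maximal (Disjoint a) k) (hs : Disjoint (a ⊔ k) s) :
    s = ⊥ := by
  have hdisj : Disjoint a (k ⊔ s) := hk.prop.disjoint_sup_right_of_disjoint_sup_left hs
  have hsk : s ≤ k := le_sup_right.trans (hk.le_of_ge hdisj le_sup_left)
  exact hs.eq_bot_of_ge (hsk.trans le_sup_right)

section Submodule

variable {R}
variable {E F : Type*} [AddCommGroup E] [Module R E] [AddCommGroup F] [Module R F]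

/-- The decomposition of the sum of two disjoint submodules as an internal direct sum; unlike in
`Submodule.prodEquivOfIsCompl`, the two need not span the ambient module. -/
noncomputable def prodEquivSupOfDisjoint {p q : Submodule R E} (h : Disjoint p q) :
    (p × q) ≃ₗ[R] ↥(p ⊔ q) :=
  LinearEquiv.ofInjective (p.subtype.coprod q.subtype) (by
    rw [← LinearMap.ker_eq_bot, LinearMap.ker_coprod_of_disjoint_range _ _ (by simpa using h),
      p.ker_subtype, q.ker_subtype, Submodule.prod_bot]) ≪≫ₗ
    LinearEquiv.ofEq _ _ (Submodule.sup_eq_range p q).symm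

theorem disjoint_map_of_disjoint_map_of_comp_eq_id {b : F →ₗ[R] E} {r : E →ₗ[R] F}
    (hr : r ∘ₗ b = .id) {X : Submodule R E} {K : Submodule R F} (h : Disjoint (X.map r) K) :
    Disjoint X (K.map b) := by
  rw [Submodule.disjoint_def] at h ⊢
  rintro _ hx ⟨k, hk, rfl⟩
  have hrk : r (b k) = k := LinearMap.congr_fun hr k
  rw [h k ⟨b k, hx, hrk⟩ hk, map_zero]

theorem exists_ker_le_and_map_eq_map {b : F →ₗ[R] E} {r : E →ₗ[R] F} (hr : r ∘ₗ b = .id)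
    (a : E →ₗ[R] F) : ∃ X : Submodule R E, LinearMap.ker r ≤ X ∧ X.map r = X.map a := by
  let T : Submodule R E →o Submodule R E :=
    ⟨fun X => LinearMap.ker r ⊔ X.map (b ∘ₗ a),
      fun _ _ h => sup_le_sup_left (Submodule.map_mono h) _⟩
  have hX : LinearMap.ker r ⊔ T.lfp.map (b ∘ₗ a) = T.lfp := T.map_lfp
  refine ⟨T.lfp, le_sup_left.trans hX.le, ?_⟩
  calc T.lfp.map r
      = (LinearMap.ker r).map r ⊔ (T.lfp.map (b ∘ₗ a)).map r := by
        rw [← Submodule.map_sup, hX]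
    _ = T.lfp.map a := by
        rw [(LinearMap.le_ker_iff_map (f := r)).1 le_rfl, bot_sup_eq, ← Submodule.map_comp,
          ← LinearMap.comp_assoc, hr, LinearMap.id_comp]

end Submodule

section Essential

variable {R}
variable {E F W : Type u} [AddCommGroup E] [Module R E] [AddCommGroup F] [Module R F]
  [AddCommGroup W] [Module R W]

theorem exists_disjoint_isEssentialSubmodule_sup (A : Submodule R E) :
    ∃ K : Submodule R E, Disjoint A K ∧ IsEssentialSubmodule R (A ⊔ K) := by
  obtain ⟨K, hK⟩ := exists_maximal_disjoint A
  exact ⟨K, hK.prop, fun S hS =>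
    eq_bot_of_maximal_disjoint_of_disjoint_sup hK (disjoint_iff.2 hS).symm⟩

theorem IsEssentialSubmodule.comap {N : Submodule R F} (hN : IsEssentialSubmodule R N)
    (f : E →ₗ[R] F) : IsEssentialSubmodule R (N.comap f) := by
  intro S hS
  have hmap : S.map f = ⊥ := hN _ (by
    rw [Submodule.map_inf_eq_map_inf_comap, hS, Submodule.map_bot])
  have hle : S ≤ N.comap f := Submodule.map_le_iff_le_comap.1 (hmap.le.trans bot_le)
  rwa [inf_eq_left.2 hle] at hS

theorem IsEssentialSubmodule.injective_of_injective_comp {i : W →ₗ[R] E}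
    (hi : IsEssentialSubmodule R (LinearMap.range i)) {f : E →ₗ[R] F}
    (hf : Function.Injective (f ∘ₗ i)) : Function.Injective f := by
  refine LinearMap.ker_eq_bot.1 (hi _ ?_)
  rw [inf_comm, ← Submodule.map_comap_eq, ← LinearMap.ker_comp, LinearMap.ker_eq_bot.2 hf,
    Submodule.map_bot]

theorem exists_isEssentialSubmodule_linearEquiv {a : E →ₗ[R] F} (ha : Function.Injective a)
    {b : F →ₗ[R] E} {r : E →ₗ[R] F} (hr : r ∘ₗ b = .id) :
    ∃ (P : Submodule R E) (Q : Submodule R F), IsEssentialSubmodule R P ∧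
      IsEssentialSubmodule R Q ∧ Nonempty (P ≃ₗ[R] Q) := by
  obtain ⟨X, hker, hX⟩ := exists_ker_le_and_map_eq_map hr a
  obtain ⟨K, hdisj, hess⟩ := exists_disjoint_isEssentialSubmodule_sup (X.map a)
  have hdisj' : Disjoint X (K.map b) :=
    disjoint_map_of_disjoint_map_of_comp_eq_id hr (hX ▸ hdisj)
  have hcomap : (X.map a ⊔ K).comap r = X ⊔ K.map b := by
    have hmap : X.map a ⊔ K = (X ⊔ K.map b).map r := by
      rw [Submodule.map_sup, hX, ← Submodule.map_comp, hr, Submodule.map_id]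
    rw [hmap, Submodule.comap_map_eq_self (hker.trans le_sup_left)]
  have hb : Function.Injective b :=
    Function.LeftInverse.injective (g := r) (LinearMap.congr_fun hr)
  exact ⟨X ⊔ K.map b, X.map a ⊔ K, hcomap ▸ hess.comap r, hess,
    ⟨(prodEquivSupOfDisjoint hdisj').symm ≪≫ₗ
      (X.equivMapOfInjective a ha).prodCongr (K.equivMapOfInjective b hb).symm ≪≫ₗ
      prodEquivSupOfDisjoint hdisj⟩⟩

end Essential

section Injective

variable {R}
variable {E F : Type u} [AddCommGroup E] [Module R E] [AddCommGroup F] [Module R F]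

theorem IsInjectiveModule.exists_comp_eq_id (hE : IsInjectiveModule R E) {f : E →ₗ[R] F}
    (hf : Function.Injective f) : ∃ r : F →ₗ[R] E, r ∘ₗ f = .id :=
  hE E F f hf .id

theorem IsInjectiveModule.nonempty_linearEquiv_of_isEssentialSubmodule
    (hE : IsInjectiveModule R E) (hF : IsInjectiveModule R F) {P : Submodule R E}
    {Q : Submodule R F} (hP : IsEssentialSubmodule R P) (hQ : IsEssentialSubmodule R Q)
    (e : P ≃ₗ[R] Q) : Nonempty (E ≃ₗ[R] F) := by
  obtain ⟨h, hh⟩ := hF P E P.subtype P.subtype_injective (Q.subtype ∘ₗ e.toLinearMap)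
  have hinj : Function.Injective h := by
    refine IsEssentialSubmodule.injective_of_injective_comp (i := P.subtype) ?_ ?_
    · rwa [P.range_subtype]
    · rw [hh]
      exact Q.subtype_injective.comp e.injective
  obtain ⟨q, hq⟩ := hE.exists_comp_eq_id hinj
  have hqinj : Function.Injective q := by
    refine IsEssentialSubmodule.injective_of_injective_comp (i := Q.subtype ∘ₗ e.toLinearMap) ?_ ?_
    · rwa [LinearMap.range_comp, e.range, Submodule.map_top, Q.range_subtype]
    · rw [← hh, ← LinearMap.comp_assoc, hq]
      exact P.subtype_injective
  have hleft : Function.LeftInverse q h := LinearMap.congr_fun hq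
  exact ⟨.ofBijective h ⟨hinj, (hleft.rightInverse_of_injective hqinj).surjective⟩⟩

theorem IsInjectiveModule.nonempty_linearEquiv_of_injective (hE : IsInjectiveModule R E)
    (hF : IsInjectiveModule R F) {a : E →ₗ[R] F} (ha : Function.Injective a) {b : F →ₗ[R] E}
    (hb : Function.Injective b) : Nonempty (E ≃ₗ[R] F) := by
  obtain ⟨r, hr⟩ := hF.exists_comp_eq_id hb
  obtain ⟨P, Q, hP, hQ, ⟨e⟩⟩ := exists_isEssentialSubmodule_linearEquiv ha hr
  exact hE.nonempty_linearEquiv_of_isEssentialSubmodule hF hP hQ e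

theorem IsInjectiveModule.map_le_of_isFullyInvariant (hF : IsInjectiveModule R F)
    {P : Submodule R E} {Q : Submodule R F} (hQ : Q.IsFullyInvariant) {a : E →ₗ[R] F}
    (ha : Function.Injective a) (haPQ : P.map a ≤ Q) (h : E →ₗ[R] F) : P.map h ≤ Q := by
  obtain ⟨φ, rfl⟩ := hF E F a ha h
  rw [Submodule.map_comp, Submodule.map_le_iff_le_comap]
  exact haPQ.trans (hQ φ)

theorem IsInjectiveModule.nonempty_linearEquiv_of_isFullyInvariant (hE : IsInjectiveModule R E)
    (hF : IsInjectiveModule R F) {P : Submodule R E} {Q : Submodule R F}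
    (hP : P.IsFullyInvariant) (hQ : Q.IsFullyInvariant)
    {a : E →ₗ[R] F} (ha : Function.Injective a) (haPQ : P.map a ≤ Q)
    {b : F →ₗ[R] E} (hb : Function.Injective b) (hbQP : Q.map b ≤ P) :
    Nonempty (P ≃ₗ[R] Q) := by
  obtain ⟨e⟩ := hE.nonempty_linearEquiv_of_injective hF ha hb
  have hPQ : P.map (e : E →ₗ[R] F) ≤ Q := hF.map_le_of_isFullyInvariant hQ ha haPQ e
  have hQP : Q.map (e.symm : F →ₗ[R] E) ≤ P := hE.map_le_of_isFullyInvariant hP hb hbQP e.symm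
  refine ⟨e.ofSubmodules P Q (hPQ.antisymm ?_)⟩
  rwa [Submodule.map_equiv_eq_comap_symm, ← Submodule.map_le_iff_le_comap]

end Injective

section Envelope

variable {R}
variable {M N E F : Type u} [AddCommGroup M] [Module R M] [AddCommGroup N] [Module R N]
  [AddCommGroup E] [Module R E] [AddCommGroup F] [Module R F]

theorem IsInjectiveEnvelope.exists_injective_map_range_le {u : M →ₗ[R] E} {v : N →ₗ[R] F}
    (hu : IsInjectiveEnvelope R M E u) (hv : IsInjectiveEnvelope R N F v) {f : M →ₗ[R] N}
    (hf : Function.Injective f) :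
    ∃ a : E →ₗ[R] F, Function.Injective a ∧ (LinearMap.range u).map a ≤ LinearMap.range v := by
  obtain ⟨-, hu_inj, hu_ess⟩ := hu
  obtain ⟨hF, hv_inj, -⟩ := hv
  obtain ⟨a, ha⟩ := hF M E u hu_inj (v ∘ₗ f)
  refine ⟨a, hu_ess.injective_of_injective_comp (ha ▸ hv_inj.comp hf), ?_⟩
  rw [← LinearMap.range_comp, ha]
  exact LinearMap.range_comp_le_range f v

theorem IsQuasiInjective.exists_isInjectiveEnvelope_isFullyInvariant
    (hM : IsQuasiInjective R M) :
    ∃ (E : Type u) (_ : AddCommGroup E) (_ : Module R E) (u : M →ₗ[R] E),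
      IsInjectiveEnvelope R M E u ∧ (LinearMap.range u).IsFullyInvariant := by
  obtain ⟨E, _, _, u, hu, hinv⟩ := hM
  refine ⟨E, _, _, u, hu, fun φ => ?_⟩
  rintro _ ⟨x, rfl⟩
  exact hinv φ x

end Envelope

/-- If `M` and `N` are quasi-injective and there are injective `R`-linear maps `M → N` and
`N → M`, then `M ≅ N`. -/
theorem stmt10 (M N : Type u) [AddCommGroup M] [Module R M] [AddCommGroup N] [Module R N]
    (hM : IsQuasiInjective R M) (hN : IsQuasiInjective R N)
    (f : M →ₗ[R] N) (hf : Function.Injective f)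
    (g : N →ₗ[R] M) (hg : Function.Injective g) :
    Nonempty (M ≃ₗ[R] N) := by
  obtain ⟨E, _, _, u, hu, hu_inv⟩ := hM.exists_isInjectiveEnvelope_isFullyInvariant
  obtain ⟨F, _, _, v, hv, hv_inv⟩ := hN.exists_isInjectiveEnvelope_isFullyInvariant
  obtain ⟨a, ha, hauv⟩ := hu.exists_injective_map_range_le hv hf
  obtain ⟨b, hb, hbvu⟩ := hv.exists_injective_map_range_le hu hg
  obtain ⟨hE, hu_inj, -⟩ := hu
  obtain ⟨hF, hv_inj, -⟩ := hv
  obtain ⟨e⟩ := hE.nonempty_linearEquiv_of_isFullyInvariant hF hu_inv hv_inv ha hauv hb hbvu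
  exact ⟨.ofInjective u hu_inj ≪≫ₗ e ≪≫ₗ (LinearEquiv.ofInjective v hv_inj).symm⟩
end
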